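/- arXiv:0904.1906 — 5 statements merged into one kernel-verified Lean document; each statement's English description precedes it below -/
import Mathlib

section
/- Let 1, α₁, α₂ be linearly independent over ℤ, let m_ν denote the sequence of best approximations, and suppose that for some index ν the determinant of the 3×3 matrix with rows m_{ν−1}, m_ν, m_{ν+1} is nonzero. Then at least one of the following two statements holds. (i) There exists an integer point (x₁⁰, x₂⁰) with x₁⁰ > 0, x₂⁰ > 0, M_{ν+2} ≤ max{x₁⁰, x₂⁰} ≤ 4·M_{ν+2}, and ‖α₁x₁⁰ + α₂x₂⁰‖ ≤ 16·(max{x₁⁰, x₂⁰})^{−2}. (ii) There exists an integer point (x₁⁰, x₂⁰) with x₁⁰ > 0, x₂⁰ > 0, max{x₁⁰, x₂⁰} ≤ 240·M_{ν+1}^τ·M_ν^{−1/τ}, and ‖α₁x₁⁰ + α₂x₂⁰‖ ≤ 24^τ·M_ν^{(1−τ)/τ}·(max{x₁⁰, x₂⁰})^{−τ}. -/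
/-- distance from a real number to the nearest integer -/
noncomputable def nint (ξ : ℝ) : ℝ := |ξ - round ξ|

/-- `1, α₁, α₂` are linearly independent over `ℤ` -/
def ZLinIndep (α₁ α₂ : ℝ) : Prop :=
  ∀ a b c : ℤ, (a : ℝ) + b * α₁ + c * α₂ = 0 → a = 0 ∧ b = 0 ∧ c = 0

/-- the golden ratio τ = (1+√5)/2 -/
noncomputable def tau : ℝ := (1 + Real.sqrt 5) / 2

/-- the value of the linear form ζ(m) = m₀ + m₁α₁ + m₂α₂ at an integer vector m -/
noncomputable def zform (α₁ α₂ : ℝ) (m : ℤ × ℤ × ℤ) : ℝ :=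
  (m.1 : ℝ) + m.2.1 * α₁ + m.2.2 * α₂

/-- the height M(m) = max{|m₁|, |m₂|} of an integer vector m = (m₀, m₁, m₂) -/
def hgt (m : ℤ × ℤ × ℤ) : ℤ := max |m.2.1| |m.2.2|

/-- `m` is a best approximation (in the sense of the linear form) for `α₁, α₂`:
`|ζ(m)|` is minimal among all integer vectors `n` with `0 < max{|n₁|,|n₂|} ≤ max{|m₁|,|m₂|}`. -/
noncomputable def IsBestApprox (α₁ α₂ : ℝ) (m : ℤ × ℤ × ℤ) : Prop :=
  0 < hgt m ∧
  ∀ n : ℤ × ℤ × ℤ, 0 < hgt n → hgt n ≤ hgt m →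
    |zform α₁ α₂ m| ≤ |zform α₁ α₂ n|

/-- `m` and `m'` are two consecutive best approximations (`m = m_ν`, `m' = m_{ν+1}`):
both are best approximations, `M(m) < M(m')`, and no best approximation has height
strictly between them. -/
noncomputable def ConsecutiveBest (α₁ α₂ : ℝ) (m m' : ℤ × ℤ × ℤ) : Prop :=
  IsBestApprox α₁ α₂ m ∧ IsBestApprox α₁ α₂ m' ∧ hgt m < hgt m' ∧
  ∀ n : ℤ × ℤ × ℤ, IsBestApprox α₁ α₂ n → hgt n ≤ hgt m ∨ hgt m' ≤ hgt n


namespace T3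

lemma tau_sq : tau ^ 2 = tau + 1 := by
  unfold tau
  have := Real.sq_sqrt (show (0:ℝ) ≤ 5 by norm_num)
  nlinarith

lemma tau_gt : (3 / 2 : ℝ) < tau := by
  unfold tau
  have : (2:ℝ) < Real.sqrt 5 := by
    rw [Real.lt_sqrt (by norm_num)]; norm_num
  linarith

lemma tau_lt : tau < 2 := by
  unfold tau
  have : Real.sqrt 5 < 3 := by
    rw [Real.sqrt_lt' (by norm_num)]; norm_num
  linarith

lemma inv_tau : 1 / tau = tau - 1 := by
  have h := tau_sq
  have h2 := tau_gt
  have : tau ≠ 0 := by linarith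
  field_simp
  nlinarith

lemma exp_tau : (1 - tau) / tau = tau - 2 := by
  have h := tau_sq
  have h2 := tau_gt
  have : tau ≠ 0 := by linarith
  field_simp
  nlinarith

/-- conclusion (ii) -/
def Goal2 (α₁ α₂ B C : ℝ) : Prop :=
  ∃ x : ℤ × ℤ, 0 < x.1 ∧ 0 < x.2 ∧
        ((max x.1 x.2 : ℤ) : ℝ) ≤ 240 * C ^ tau * B ^ (-(1 / tau)) ∧
        nint (α₁ * x.1 + α₂ * x.2) ≤
          24 ^ tau * B ^ ((1 - tau) / tau) * ((max x.1 x.2 : ℤ) : ℝ) ^ (-tau)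

lemma goal_of_pos (α₁ α₂ B C S z : ℝ) (hB : 0 < B) (n : ℤ × ℤ × ℤ)
    (h1 : 0 < n.2.1) (h2 : 0 < n.2.2) (h3 : (n.2.1 : ℝ) ≤ S) (h4 : (n.2.2 : ℝ) ≤ S)
    (hz : |zform α₁ α₂ n| ≤ z) (hS : S ≤ 240 * (C ^ tau * B ^ (1 - tau)))
    (hzS : z ≤ 24 ^ tau * B ^ (tau - 2) * S ^ (-tau)) : Goal2 α₁ α₂ B C := by
  refine ⟨(n.2.1, n.2.2), h1, h2, ?_, ?_⟩
  · rw [inv_tau, neg_sub]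
    push_cast
    exact (max_le h3 h4).trans (by linarith)
  · rw [exp_tau]
    have hx : (0:ℝ) < ((max n.2.1 n.2.2 : ℤ) : ℝ) := by
      exact_mod_cast lt_max_of_lt_left h1
    have hxS : ((max n.2.1 n.2.2 : ℤ) : ℝ) ≤ S := by
      push_cast; exact max_le h3 h4
    have : nint (α₁ * n.2.1 + α₂ * n.2.2) ≤ |zform α₁ α₂ n| := by
      unfold nint
      refine (round_le _ (-n.1)).trans (le_of_eq ?_)
      congr 1
      unfold zform; push_cast; ring
    refine (this.trans (hz.trans hzS)).trans ?_
    have h24 : (0:ℝ) < 24 ^ tau := Real.rpow_pos_of_pos (by norm_num) _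
    have hBp : 0 < B ^ (tau - 2) := Real.rpow_pos_of_pos hB _
    refine mul_le_mul_of_nonneg_left ?_ (by positivity)
    exact Real.rpow_le_rpow_of_nonpos hx hxS (by linarith [tau_gt])

lemma zform_neg (α₁ α₂ : ℝ) (n : ℤ × ℤ × ℤ) : zform α₁ α₂ (-n) = - zform α₁ α₂ n := by
  unfold zform; simp; ring

lemma hgt_neg (n : ℤ × ℤ × ℤ) : hgt (-n) = hgt n := by
  unfold hgt; simp

lemma goal_of_same (α₁ α₂ B C S z : ℝ) (hB : 0 < B) (n : ℤ × ℤ × ℤ)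
    (h1 : 0 < n.2.1 * n.2.2) (h3 : (hgt n : ℝ) ≤ S)
    (hz : |zform α₁ α₂ n| ≤ z) (hS : S ≤ 240 * (C ^ tau * B ^ (1 - tau)))
    (hzS : z ≤ 24 ^ tau * B ^ (tau - 2) * S ^ (-tau)) : Goal2 α₁ α₂ B C := by
  have e : (hgt n : ℝ) = max |(n.2.1 : ℝ)| |(n.2.2 : ℝ)| := by unfold hgt; push_cast; rfl
  rw [e, max_le_iff] at h3
  have h31 := abs_le.1 h3.1
  have h32 := abs_le.1 h3.2
  rcases mul_pos_iff.1 h1 with ⟨p, q⟩ | ⟨p, q⟩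
  · exact goal_of_pos α₁ α₂ B C S z hB n p q h31.2 h32.2 hz hS hzS
  · refine goal_of_pos α₁ α₂ B C S z hB (-n) (by simpa using p) (by simpa using q) ?_ ?_ ?_ hS hzS
    · simp; linarith
    · simp; linarith
    · rwa [zform_neg, abs_neg]

/-- numeric: T ≥ C -/
lemma C_le_T (B C : ℝ) (hB : 0 < B) (hBC : B ≤ C) : C ≤ C ^ tau * B ^ (1 - tau) := by
  have hC : 0 < C := hB.trans_le hBC
  have h1 : C ^ (1 - tau) ≤ B ^ (1 - tau) :=
    Real.rpow_le_rpow_of_nonpos hB hBC (by linarith [tau_gt])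
  calc C = C ^ tau * C ^ (1 - tau) := by
        rw [← Real.rpow_add hC]; simp
    _ ≤ _ := mul_le_mul_of_nonneg_left h1 (Real.rpow_pos_of_pos hC _).le

lemma num0 (B C : ℝ) (hB : 0 < B) (hBC : B ≤ C) :
    4 / 3 / C ^ 2 ≤ 24 ^ tau * B ^ (tau - 2) * C ^ (-tau) := by
  have hC : 0 < C := hB.trans_le hBC
  have h1 : C ^ (tau - 2) ≤ B ^ (tau - 2) :=
    Real.rpow_le_rpow_of_nonpos hB hBC (by linarith [tau_lt])
  have h2 : (24:ℝ) ≤ 24 ^ tau := by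
    have := Real.rpow_le_rpow_of_exponent_le (show (1:ℝ) ≤ 24 by norm_num)
      (show (1:ℝ) ≤ tau by linarith [tau_gt])
    simpa using this
  have h3 : C ^ (tau - 2) * C ^ (-tau) = 1 / C ^ 2 := by
    rw [← Real.rpow_add hC, show tau - 2 + -tau = -(2:ℝ) by ring, Real.rpow_neg hC.le]
    norm_num
  have hCp : 0 < C ^ (-tau) := Real.rpow_pos_of_pos hC _
  have hCq : 0 < C ^ (tau-2) := Real.rpow_pos_of_pos hC _
  calc 4 / 3 / C ^ 2 = 4 / 3 * (1 / C ^ 2) := by ring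
    _ ≤ 24 * (1 / C ^ 2) := by gcongr; norm_num
    _ = 24 * C ^ (tau - 2) * C ^ (-tau) := by rw [← h3]; ring
    _ ≤ _ := by gcongr

lemma num1 (B C : ℝ) (hB : 0 < B) (hBC : B ≤ C) (h : C ≤ 4 * B) :
    2 / B ^ 2 ≤ 24 ^ tau * B ^ (tau - 2) * (3 * C) ^ (-tau) := by
  have h1 : (12 * B) ^ (-tau) ≤ (3 * C) ^ (-tau) :=
    Real.rpow_le_rpow_of_nonpos (by linarith) (by linarith) (by linarith [tau_gt])
  have h2 : (2:ℝ) ≤ 2 ^ tau := by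
    have := Real.rpow_le_rpow_of_exponent_le (show (1:ℝ) ≤ 2 by norm_num)
      (show (1:ℝ) ≤ tau by linarith [tau_gt])
    simpa using this
  have h3 : B ^ (tau - 2) * B ^ (-tau) = 1 / B ^ 2 := by
    rw [← Real.rpow_add hB, show tau - 2 + -tau = -(2:ℝ) by ring, Real.rpow_neg hB.le]
    norm_num
  have h4 : (24:ℝ) ^ tau * 12 ^ (-tau) = 2 ^ tau := by
    rw [show (24:ℝ) = 2 * 12 by norm_num, Real.mul_rpow (by norm_num) (by norm_num), mul_assoc,
      ← Real.rpow_add (by norm_num)]; simp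
  have hBq : 0 < B ^ (tau-2) := Real.rpow_pos_of_pos hB _
  have h24 : (0:ℝ) < 24 ^ tau := Real.rpow_pos_of_pos (by norm_num) _
  calc 2 / B ^ 2 = 2 * (1 / B ^ 2) := by ring
    _ ≤ 2 ^ tau * (1 / B ^ 2) := by gcongr
    _ = 24 ^ tau * B ^ (tau - 2) * (12 * B) ^ (-tau) := by
        rw [Real.mul_rpow (by norm_num) hB.le, ← h3, ← h4]; ring
    _ ≤ _ := by gcongr

lemma num2 (B C z : ℝ) (hB : 0 < B) (hBC : B ≤ C)
    (hz : z ≤ 1 / (C * (C ^ tau * B ^ (1 - tau)))) :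
    9 * (C / B) * z ≤ 24 ^ tau * B ^ (tau - 2) * (4 * C) ^ (-tau) := by
  have hC : 0 < C := hB.trans_le hBC
  have h2 : (9:ℝ) ≤ 6 ^ tau := by
    have := Real.rpow_le_rpow_of_exponent_le (show (1:ℝ) ≤ 6 by norm_num) tau_gt.le
    have h' : (9:ℝ) ≤ 6 ^ (3 / 2 : ℝ) := by
      rw [show (3/2:ℝ) = 1 + 1/2 by norm_num, Real.rpow_add (by norm_num), Real.rpow_one,
        ← Real.sqrt_eq_rpow]
      have : (2:ℝ) ≤ Real.sqrt 6 := Real.le_sqrt_of_sq_le (by norm_num)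
      linarith
    linarith
  have h4 : (24:ℝ) ^ tau * 4 ^ (-tau) = 6 ^ tau := by
    rw [show (24:ℝ) = 6 * 4 by norm_num, Real.mul_rpow (by norm_num) (by norm_num), mul_assoc,
      ← Real.rpow_add (by norm_num)]; simp
  have h5 : C / B * (1 / (C * (C ^ tau * B ^ (1 - tau)))) = B ^ (tau - 2) * C ^ (-tau) := by
    have e1 : B ^ (tau - 2) = 1 / (B * B ^ (1 - tau)) := by
      rw [show tau - 2 = -(1 + (1 - tau)) by ring, Real.rpow_neg hB.le, Real.rpow_add hB,
        Real.rpow_one, one_div]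
    rw [e1, Real.rpow_neg hC.le]
    have := (Real.rpow_pos_of_pos hC tau).ne'
    have := (Real.rpow_pos_of_pos hB (1 - tau)).ne'
    field_simp
  have hCp : 0 < C ^ (-tau) := Real.rpow_pos_of_pos hC _
  have hBq : 0 < B ^ (tau-2) := Real.rpow_pos_of_pos hB _
  calc 9 * (C / B) * z ≤ 9 * (C / B) * (1 / (C * (C ^ tau * B ^ (1 - tau)))) := by gcongr
    _ = 9 * (B ^ (tau - 2) * C ^ (-tau)) := by rw [mul_assoc, h5]
    _ ≤ 6 ^ tau * (B ^ (tau - 2) * C ^ (-tau)) := by gcongr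
    _ = _ := by rw [Real.mul_rpow (by norm_num) hC.le, ← h4]; ring

lemma num3 (B C y : ℝ) (hB : 0 < B) (hBC : B ≤ C) (hy : 0 < y)
    (hyT : y ≤ C ^ tau * B ^ (1 - tau)) :
    1 / (y * C) ≤ 24 ^ tau * B ^ (tau - 2) * (4 * y) ^ (-tau) := by
  have hC : 0 < C := hB.trans_le hBC
  have h2 : (1:ℝ) ≤ 6 ^ tau := Real.one_le_rpow (by norm_num) (by linarith [tau_gt])
  have h4 : (24:ℝ) ^ tau * 4 ^ (-tau) = 6 ^ tau := by
    rw [show (24:ℝ) = 6 * 4 by norm_num, Real.mul_rpow (by norm_num) (by norm_num), mul_assoc,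
      ← Real.rpow_add (by norm_num)]; simp
  have hs := tau_sq
  have h5 : y ^ (tau - 1) ≤ C * B ^ (tau - 2) := by
    calc y ^ (tau - 1) ≤ (C ^ tau * B ^ (1 - tau)) ^ (tau - 1) :=
          Real.rpow_le_rpow hy.le hyT (by linarith [tau_gt])
      _ = C * B ^ (tau - 2) := by
          rw [Real.mul_rpow (Real.rpow_pos_of_pos hC _).le (Real.rpow_pos_of_pos hB _).le,
            ← Real.rpow_mul hC.le, ← Real.rpow_mul hB.le,
            show tau * (tau - 1) = 1 by linarith,
            show (1 - tau) * (tau - 1) = tau - 2 by linarith, Real.rpow_one]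
  have h6 : y ^ (tau - 1) * y ^ (-tau) = 1 / y := by
    rw [← Real.rpow_add hy, show tau - 1 + -tau = -1 by ring, Real.rpow_neg_one, one_div]
  have hyp : 0 < y ^ (-tau) := Real.rpow_pos_of_pos hy _
  have hBq : 0 < B ^ (tau-2) := Real.rpow_pos_of_pos hB _
  calc 1 / (y * C) = (1 / C) * (1 / y) := by field_simp
    _ = (1 / C) * (y ^ (tau - 1) * y ^ (-tau)) := by rw [h6]
    _ ≤ (1 / C) * ((C * B ^ (tau - 2)) * y ^ (-tau)) := by gcongr
    _ = 1 * (B ^ (tau - 2) * y ^ (-tau)) := by field_simp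
    _ ≤ 6 ^ tau * (B ^ (tau - 2) * y ^ (-tau)) := by gcongr
    _ = _ := by rw [Real.mul_rpow (by norm_num) hy.le, ← h4]; ring

/-- two-vector lemma -/
lemma two_vec (u1 u2 v1 v2 V : ℤ) (hu2 : 0 ≤ u2) (h12 : u2 ≤ u1) (hu1 : 0 < u1)
    (hv1 : 0 ≤ v1) (hv2 : 0 ≤ v2) (hV1 : v1 ≤ V) (hV2 : v2 ≤ V) (hVu : u1 ≤ V)
    (hD : u1 * u2 < |u1 * v2 - u2 * v1|) :
    ∃ k : ℤ, 0 ≤ k ∧ k * u1 ≤ V + u1 ∧ (v1 - k * u1) * (v2 - k * u2) < 0 ∧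
      |v1 - k * u1| ≤ V ∧ |v2 - k * u2| ≤ V := by
  rcases lt_abs.1 hD with h | h
  · have e := Int.emod_add_mul_ediv v1 u1
    have p := Int.emod_nonneg v1 hu1.ne'
    have q := Int.emod_lt_of_pos v1 hu1
    have r := Int.ediv_nonneg hv1 hu1.le
    set k := v1 / u1
    set m := v1 % u1
    have hA : v1 - (k + 1) * u1 < 0 := by linarith
    have hB : 0 < v2 - (k + 1) * u2 := by
      have : 0 < u1 * (v2 - (k + 1) * u2) := by nlinarith
      exact pos_of_mul_pos_right this hu1.le
    have hC : 0 ≤ (k + 1) * u2 := by positivity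
    refine ⟨k + 1, by linarith, by linarith, mul_neg_of_neg_of_pos hA hB, ?_, ?_⟩
    · rw [abs_le]; constructor <;> linarith
    · rw [abs_le]; constructor <;> linarith
  · have hv1' : 1 ≤ v1 := by
      by_contra hh
      have : v1 = 0 := by omega
      subst this
      nlinarith [mul_nonneg hu1.le hv2, mul_nonneg hu1.le hu2]
    have e := Int.emod_add_mul_ediv (v1 - 1) u1
    have p := Int.emod_nonneg (v1 - 1) hu1.ne'
    have q := Int.emod_lt_of_pos (v1 - 1) hu1
    have r := Int.ediv_nonneg (show 0 ≤ v1 - 1 by linarith) hu1.le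
    set k := (v1 - 1) / u1
    set m := (v1 - 1) % u1
    have hA : 0 < v1 - k * u1 := by linarith
    have hB : v2 - k * u2 < 0 := by
      have : u1 * (v2 - k * u2) < 0 := by nlinarith
      exact neg_of_mul_neg_right this hu1.le
    have hC : k * u2 ≤ k * u1 := by gcongr
    refine ⟨k, by linarith, by linarith, mul_neg_of_pos_of_neg hA hB, ?_, ?_⟩
    · rw [abs_le]; constructor <;> linarith
    · rw [abs_le]; constructor <;> linarith

end T3

namespace T3

lemma hgt_le_iff (n : ℤ × ℤ × ℤ) (H : ℤ) : hgt n ≤ H ↔ |n.2.1| ≤ H ∧ |n.2.2| ≤ H := by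
  unfold hgt; exact max_le_iff

lemma hgt_lt_iff (n : ℤ × ℤ × ℤ) (H : ℤ) : hgt n < H ↔ |n.2.1| < H ∧ |n.2.2| < H := by
  unfold hgt; exact max_lt_iff

lemma hgt_nonneg (n : ℤ × ℤ × ℤ) : 0 ≤ hgt n := by
  unfold hgt; exact le_max_of_le_left (abs_nonneg _)

lemma hgt_pos_iff (n : ℤ × ℤ × ℤ) : 0 < hgt n ↔ ¬ (n.2.1 = 0 ∧ n.2.2 = 0) := by
  unfold hgt; rw [lt_max_iff, abs_pos, abs_pos]; tauto

/-- between consecutive best approximations nothing is better than the first -/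
lemma next_best (α₁ α₂ : ℝ) (b c : ℤ × ℤ × ℤ) (hbc : ConsecutiveBest α₁ α₂ b c)
    (n : ℤ × ℤ × ℤ) (hn : 0 < hgt n) (hnc : hgt n < hgt c) :
    |zform α₁ α₂ b| ≤ |zform α₁ α₂ n| := by
  obtain ⟨hb, hc, hlt, hcons⟩ := hbc
  by_contra hcon
  push Not at hcon
  set H := hgt n with hH
  let s : Finset (ℤ × ℤ) :=
    (Finset.Icc (-H) H ×ˢ Finset.Icc (-H) H).filter (fun p => ¬ (p.1 = 0 ∧ p.2 = 0))
  let f : ℤ × ℤ → ℝ := fun p => nint (p.1 * α₁ + p.2 * α₂)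
  have key : ∀ k : ℤ × ℤ × ℤ, f k.2 ≤ |zform α₁ α₂ k| := by
    intro k
    refine (round_le _ (-k.1)).trans (le_of_eq ?_)
    congr 1
    unfold zform; push_cast; ring
  have mem : ∀ k : ℤ × ℤ × ℤ, 0 < hgt k → hgt k ≤ H → k.2 ∈ s := by
    intro k h1 h2
    rw [hgt_le_iff, abs_le, abs_le] at h2
    rw [hgt_pos_iff] at h1
    simp only [s, Finset.mem_filter, Finset.mem_product, Finset.mem_Icc]
    exact ⟨h2, h1⟩
  obtain ⟨p, hp, hmin⟩ := s.exists_min_image f ⟨n.2, mem n hn le_rfl⟩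
  let m : ℤ × ℤ × ℤ := (-round (p.1 * α₁ + p.2 * α₂), p.1, p.2)
  have hfm : |zform α₁ α₂ m| = f p := by
    simp only [zform, m, f, nint]; congr 1; push_cast; ring
  simp only [s, Finset.mem_filter, Finset.mem_product, Finset.mem_Icc] at hp
  have hm0 : 0 < hgt m := (hgt_pos_iff m).2 hp.2
  have hmH : hgt m ≤ H := by
    rw [hgt_le_iff, abs_le, abs_le]; exact hp.1
  have hmb : IsBestApprox α₁ α₂ m := by
    refine ⟨hm0, fun k hk hk2 => ?_⟩
    rw [hfm]
    exact (hmin _ (mem k hk (hk2.trans hmH))).trans (key k)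
  have hmn : |zform α₁ α₂ m| < |zform α₁ α₂ b| := by
    rw [hfm]
    exact ((hmin _ (mem n hn le_rfl)).trans (key n)).trans_lt hcon
  rcases hcons m hmb with h | h
  · exact absurd (hb.2 m hm0 h) (not_le.2 hmn)
  · omega

lemma dirichlet (α₁ α₂ : ℝ) (C : ℤ) (hC : 2 ≤ C) :
    ∃ n : ℤ × ℤ × ℤ, 0 < hgt n ∧ hgt n < C ∧ |zform α₁ α₂ n| ≤ 1 / ((C:ℝ) ^ 2 - 1) := by
  let s : Finset (ℤ × ℤ) := Finset.Ico 0 C ×ˢ Finset.Ico 0 C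
  let t : Finset ℤ := Finset.Ico 0 (C ^ 2 - 1)
  have hCr : (2:ℝ) ≤ C := by exact_mod_cast hC
  have hpos : (0:ℝ) < (C:ℝ) ^ 2 - 1 := by nlinarith
  let f : ℤ × ℤ → ℤ := fun p => ⌊Int.fract (p.1 * α₁ + p.2 * α₂) * ((C:ℝ) ^ 2 - 1)⌋
  have hcard : t.card < s.card := by
    simp only [t, s, Finset.card_product, Int.card_Ico]
    have : ((C ^ 2 - 1 - 0).toNat : ℤ) < ((C - 0).toNat * (C - 0).toNat : ℕ) := by
      rw [Int.toNat_of_nonneg (by nlinarith)]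
      push_cast
      rw [Int.toNat_of_nonneg (by linarith)]
      nlinarith
    exact_mod_cast this
  have hmap : ∀ p ∈ s, f p ∈ t := by
    intro p _
    simp only [t, Finset.mem_Ico, f]
    have h1 := Int.fract_nonneg ((p.1:ℝ) * α₁ + p.2 * α₂)
    have h2 := Int.fract_lt_one ((p.1:ℝ) * α₁ + p.2 * α₂)
    constructor
    · exact Int.floor_nonneg.2 (by positivity)
    · rw [Int.floor_lt]; push_cast; nlinarith
  obtain ⟨p, hp, q, hq, hne, hfe⟩ := Finset.exists_ne_map_eq_of_card_lt_of_maps_to hcard hmap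
  simp only [s, Finset.mem_product, Finset.mem_Ico] at hp hq
  refine ⟨(-(⌊(p.1:ℝ) * α₁ + p.2 * α₂⌋ - ⌊(q.1:ℝ) * α₁ + q.2 * α₂⌋), p.1 - q.1, p.2 - q.2),
    ?_, ?_, ?_⟩
  · rw [hgt_pos_iff]
    rintro ⟨h1, h2⟩
    exact hne (Prod.ext (by simpa [sub_eq_zero] using h1) (by simpa [sub_eq_zero] using h2))
  · rw [hgt_lt_iff, abs_lt, abs_lt]
    dsimp only
    omega
  · have h := Int.abs_sub_lt_one_of_floor_eq_floor hfe
    rw [← sub_mul, abs_mul, abs_of_pos hpos] at h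
    rw [le_div_iff₀ hpos]
    refine le_trans (le_of_eq ?_) h.le
    congr 2
    simp only [zform, Int.fract]
    push_cast; ring

lemma best_bound (α₁ α₂ : ℝ) (b c : ℤ × ℤ × ℤ) (hbc : ConsecutiveBest α₁ α₂ b c) :
    |zform α₁ α₂ b| ≤ 4 / 3 / (hgt c : ℝ) ^ 2 := by
  have h2 : 2 ≤ hgt c := by
    have := hbc.1.1
    have := hbc.2.2.1
    omega
  obtain ⟨n, h, h', h''⟩ := dirichlet α₁ α₂ (hgt c) h2
  refine (next_best α₁ α₂ b c hbc n h h').trans (h''.trans ?_)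
  have hCr : (2:ℝ) ≤ hgt c := by exact_mod_cast h2
  rw [div_div, div_le_div_iff₀ (by nlinarith) (by positivity)]
  nlinarith

lemma strict_best (α₁ α₂ : ℝ) (hind : ZLinIndep α₁ α₂) (b c : ℤ × ℤ × ℤ)
    (hbc : ConsecutiveBest α₁ α₂ b c) : |zform α₁ α₂ c| < |zform α₁ α₂ b| := by
  obtain ⟨hb, hc, hlt, -⟩ := hbc
  refine lt_of_le_of_ne (hc.2 b hb.1 hlt.le) ?_
  intro he
  rcases abs_eq_abs.1 he with h | h
  · have := hind (c.1 - b.1) (c.2.1 - b.2.1) (c.2.2 - b.2.2) (by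
      unfold zform at h; push_cast; linarith)
    have e1 : c.2.1 = b.2.1 := by omega
    have e2 : c.2.2 = b.2.2 := by omega
    unfold hgt at hlt; rw [e1, e2] at hlt; omega
  · have := hind (c.1 + b.1) (c.2.1 + b.2.1) (c.2.2 + b.2.2) (by
      unfold zform at h; push_cast; linarith)
    have e1 : c.2.1 = -b.2.1 := by omega
    have e2 : c.2.2 = -b.2.2 := by omega
    unfold hgt at hlt; rw [e1, e2, abs_neg, abs_neg] at hlt; omega

lemma zform_pos (α₁ α₂ : ℝ) (hind : ZLinIndep α₁ α₂) (b : ℤ × ℤ × ℤ) (hb : 0 < hgt b) :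
    0 < |zform α₁ α₂ b| := by
  rw [abs_pos]
  intro h
  have := hind b.1 b.2.1 b.2.2 h
  exact (hgt_pos_iff b).1 hb this.2

/-- remainder in `[-g/2, g/2]` -/
lemma near_div (β g : ℤ) (hg : 0 < g) : ∃ q : ℤ, 2 * |β - g * q| ≤ g := by
  refine ⟨(2 * β + g) / (2 * g), ?_⟩
  have e := Int.emod_add_mul_ediv (2 * β + g) (2 * g)
  have p := Int.emod_nonneg (2 * β + g) (show 2 * g ≠ 0 by omega)
  have q := Int.emod_lt_of_pos (2 * β + g) (show 0 < 2 * g by omega)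
  set k := (2 * β + g) / (2 * g)
  rcases abs_cases (β - g * k) with ⟨h, -⟩ | ⟨h, -⟩ <;> rw [h] <;> linarith

/-- consecutive best approximations form a basis of their plane lattice -/
lemma basis_prop (α₁ α₂ : ℝ) (hind : ZLinIndep α₁ α₂) (b c : ℤ × ℤ × ℤ)
    (hbc : ConsecutiveBest α₁ α₂ b c)
    (hli : ∀ r s : ℤ, r * b.1 + s * c.1 = 0 → r * b.2.1 + s * c.2.1 = 0 →
      r * b.2.2 + s * c.2.2 = 0 → r = 0 ∧ s = 0)
    (n : ℤ × ℤ × ℤ) (g β γ : ℤ) (hg : 0 < g)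
    (h0 : g * n.1 = β * b.1 + γ * c.1) (h1 : g * n.2.1 = β * b.2.1 + γ * c.2.1)
    (h2 : g * n.2.2 = β * b.2.2 + γ * c.2.2) : g ∣ β ∧ g ∣ γ := by
  obtain ⟨q, hq⟩ := near_div β g hg
  obtain ⟨q', hq'⟩ := near_div γ g hg
  set r := β - g * q with hr
  set r' := γ - g * q' with hr'
  let m : ℤ × ℤ × ℤ := (n.1 - q * b.1 - q' * c.1, n.2.1 - q * b.2.1 - q' * c.2.1,
    n.2.2 - q * b.2.2 - q' * c.2.2)
  have m0 : g * m.1 = r * b.1 + r' * c.1 := by simp only [m, hr, hr']; linear_combination h0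
  have m1 : g * m.2.1 = r * b.2.1 + r' * c.2.1 := by simp only [m, hr, hr']; linear_combination h1
  have m2 : g * m.2.2 = r * b.2.2 + r' * c.2.2 := by simp only [m, hr, hr']; linear_combination h2
  have hlt := hbc.2.2.1
  have hbB := (hgt_le_iff b (hgt b)).1 le_rfl
  have hcC := (hgt_le_iff c (hgt c)).1 le_rfl
  have coord : ∀ x y z : ℤ, |y| ≤ hgt b → |z| ≤ hgt c → g * x = r * y + r' * z →
      |x| < hgt c := by
    intro x y z hy hz hx
    have e1 : g * |x| ≤ |r| * |y| + |r'| * |z| := by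
      have e0 : g * |x| = |r * y + r' * z| := by rw [← hx, abs_mul, abs_of_pos hg]
      rw [e0, ← abs_mul, ← abs_mul]
      exact abs_add_le _ _
    have e2 : |r| * |y| ≤ |r| * hgt b := by gcongr
    have e3 : |r'| * |z| ≤ |r'| * hgt c := by gcongr
    have e4 : 2 * |r| * hgt b ≤ g * hgt b := by
      have := hgt_nonneg b; gcongr
    have e5 : 2 * |r'| * hgt c ≤ g * hgt c := by
      have := hgt_nonneg c; gcongr
    have e6 : g * hgt b < g * hgt c := by gcongr
    have : g * |x| < g * hgt c := by nlinarith
    exact lt_of_mul_lt_mul_left this hg.le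
  have hmC : hgt m < hgt c := by
    rw [hgt_lt_iff]
    exact ⟨coord _ _ _ hbB.1 hcC.1 m1, coord _ _ _ hbB.2 hcC.2 m2⟩
  have hst := strict_best α₁ α₂ hind b c hbc
  have hgr : (0:ℝ) < g := by exact_mod_cast hg
  have hz : |zform α₁ α₂ m| < |zform α₁ α₂ b| := by
    have e : (g:ℝ) * zform α₁ α₂ m = r * zform α₁ α₂ b + r' * zform α₁ α₂ c := by
      have m0' : (g:ℝ) * m.1 = r * b.1 + r' * c.1 := by exact_mod_cast m0
      have m1' : (g:ℝ) * m.2.1 = r * b.2.1 + r' * c.2.1 := by exact_mod_cast m1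
      have m2' : (g:ℝ) * m.2.2 = r * b.2.2 + r' * c.2.2 := by exact_mod_cast m2
      unfold zform
      linear_combination m0' + α₁ * m1' + α₂ * m2'
    have e1 : (g:ℝ) * |zform α₁ α₂ m| ≤ |(r:ℝ)| * |zform α₁ α₂ b| + |(r':ℝ)| * |zform α₁ α₂ c| := by
      have e0 : (g:ℝ) * |zform α₁ α₂ m| = |r * zform α₁ α₂ b + r' * zform α₁ α₂ c| := by
        rw [← e, abs_mul, abs_of_pos hgr]
      rw [e0, ← abs_mul, ← abs_mul]
      exact abs_add_le _ _
    have e2 : 2 * |(r:ℝ)| ≤ g := by exact_mod_cast hq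
    have e3 : 2 * |(r':ℝ)| ≤ g := by exact_mod_cast hq'
    have e4 : 2 * |(r:ℝ)| * |zform α₁ α₂ b| ≤ g * |zform α₁ α₂ b| := by gcongr
    have e5 : 2 * |(r':ℝ)| * |zform α₁ α₂ c| ≤ g * |zform α₁ α₂ c| := by gcongr
    have e6 : (g:ℝ) * |zform α₁ α₂ c| < g * |zform α₁ α₂ b| := by gcongr
    have : (g:ℝ) * |zform α₁ α₂ m| < g * |zform α₁ α₂ b| := by nlinarith
    exact lt_of_mul_lt_mul_left this hgr.le
  have hm0 : ¬ 0 < hgt m := fun h =>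
    absurd (next_best α₁ α₂ b c hbc m h hmC) (not_le.2 hz)
  rw [hgt_pos_iff, not_not] at hm0
  have hzb : |zform α₁ α₂ b| < 1 := by
    refine (best_bound α₁ α₂ b c hbc).trans_lt ?_
    have h2 : 2 ≤ hgt c := by
      have := hbc.1.1
      omega
    have hCr : (2:ℝ) ≤ hgt c := by exact_mod_cast h2
    rw [div_lt_one (by positivity)]; nlinarith
  have hm00 : m.1 = 0 := by
    have : zform α₁ α₂ m = m.1 := by unfold zform; rw [hm0.1, hm0.2]; simp
    rw [this] at hz
    have : |(m.1:ℝ)| < 1 := hz.trans hzb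
    have h3 : |m.1| < 1 := by exact_mod_cast this
    exact Int.abs_lt_one_iff.1 h3
  rw [hm00] at m0
  rw [hm0.1] at m1
  rw [hm0.2] at m2
  obtain ⟨z1, z2⟩ := hli r r' (by linarith) (by linarith) (by linarith)
  exact ⟨⟨q, by linarith⟩, ⟨q', by linarith⟩⟩

/-- completion to a basis -/
lemma exists_compl (α₁ α₂ : ℝ) (hind : ZLinIndep α₁ α₂) (b c : ℤ × ℤ × ℤ)
    (hbc : ConsecutiveBest α₁ α₂ b c)
    (hli : ∀ r s : ℤ, r * b.1 + s * c.1 = 0 → r * b.2.1 + s * c.2.1 = 0 →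
      r * b.2.2 + s * c.2.2 = 0 → r = 0 ∧ s = 0) :
    ∃ v : ℤ × ℤ × ℤ, v.1 * (b.2.1 * c.2.2 - b.2.2 * c.2.1) +
      v.2.1 * (b.2.2 * c.1 - b.1 * c.2.2) + v.2.2 * (b.1 * c.2.1 - b.2.1 * c.1) = 1 := by
  set w0 := b.2.1 * c.2.2 - b.2.2 * c.2.1 with hw0
  set w1 := b.2.2 * c.1 - b.1 * c.2.2 with hw1
  set w2 := b.1 * c.2.1 - b.2.1 * c.1 with hw2
  set e : ℤ := (Int.gcd w1 w2 : ℤ) with he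
  set g : ℤ := (Int.gcd w0 e : ℤ) with hg
  have g0 : g ∣ w0 := Int.gcd_dvd_left ..
  have ge : g ∣ e := Int.gcd_dvd_right ..
  have g1 : g ∣ w1 := ge.trans (Int.gcd_dvd_left ..)
  have g2 : g ∣ w2 := ge.trans (Int.gcd_dvd_right ..)
  have bez1 : e = w1 * Int.gcdA w1 w2 + w2 * Int.gcdB w1 w2 := Int.gcd_eq_gcd_ab ..
  have bez2 : g = w0 * Int.gcdA w0 e + e * Int.gcdB w0 e := Int.gcd_eq_gcd_ab ..
  have gpos : 0 < g := by
    rcases (Int.natCast_nonneg (Int.gcd w0 e)).lt_or_eq with h | h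
    · exact h
    · exfalso
      have hgz : g = 0 := by rw [hg]; exact h.symm
      rw [hgz] at g0 g1 g2
      have z0 : w0 = 0 := by simpa using g0
      have z1 : w1 = 0 := by simpa using g1
      have z2 : w2 = 0 := by simpa using g2
      have a1 := hli c.1 (-b.1) (by ring) (by linarith) (by linarith)
      have a2 := hli c.2.1 (-b.2.1) (by linarith) (by linarith) (by linarith)
      have a3 := hli c.2.2 (-b.2.2) (by linarith) (by linarith) (by linarith)
      have := hli 0 1 (by linarith [a1.1]) (by linarith [a2.1]) (by linarith [a3.1])
      omega
  obtain ⟨k0, hk0⟩ := g0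
  obtain ⟨k1, hk1⟩ := g1
  obtain ⟨k2, hk2⟩ := g2
  have d0 := basis_prop α₁ α₂ hind b c hbc hli (0, -k2, k1) g c.1 (-b.1) gpos
    (by simp; ring) (by simp; linarith) (by simp; linarith)
  have d1 := basis_prop α₁ α₂ hind b c hbc hli (k2, 0, -k0) g c.2.1 (-b.2.1) gpos
    (by simp; linarith) (by simp; ring) (by simp; linarith)
  have d2 := basis_prop α₁ α₂ hind b c hbc hli (-k1, k0, 0) g c.2.2 (-b.2.2) gpos
    (by simp; linarith) (by simp; linarith) (by simp; ring)
  obtain ⟨j0, hj0⟩ := d0.1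
  obtain ⟨j1, hj1⟩ := d1.1
  obtain ⟨j2, hj2⟩ := d2.1
  have dd := basis_prop α₁ α₂ hind b c hbc hli (j0, j1, j2) g 0 1 gpos
    (by simp [hj0]) (by simp [hj1]) (by simp [hj2])
  have hg1 : g = 1 := Int.eq_one_of_dvd_one gpos.le dd.2
  refine ⟨(Int.gcdA w0 e, Int.gcdB w0 e * Int.gcdA w1 w2, Int.gcdB w0 e * Int.gcdB w1 w2), ?_⟩
  simp only
  rw [← hg1]
  linear_combination -bez2 - Int.gcdB w0 e * bez1

end T3

namespace T3

lemma cramer (p0 p1 p2 q0 q1 q2 r0 r1 r2 W R : ℝ) (hW : W ≠ 0)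
    (h : W = p0 * (q1 * r2 - q2 * r1) + p1 * (q2 * r0 - q0 * r2) + p2 * (q0 * r1 - q1 * r0)) :
    ∃ t u : ℝ,
      (R * (r0 * (q2 - q1) + q0 * (r1 - r2)) / W) * p0 + t * q0 + u * r0 = 0 ∧
      (R * (r0 * (q2 - q1) + q0 * (r1 - r2)) / W) * p1 + t * q1 + u * r1 = R ∧
      (R * (r0 * (q2 - q1) + q0 * (r1 - r2)) / W) * p2 + t * q2 + u * r2 = R := by
  refine ⟨R * (p0 * (r2 - r1) + r0 * (p1 - p2)) / W, R * (p0 * (q1 - q2) + q0 * (p2 - p1)) / W,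
    ?_, ?_, ?_⟩
  · field_simp; ring
  · field_simp; rw [h]; ring
  · field_simp; rw [h]; ring

/-- the 3×3 determinant, expanded -/
def W3 (p q r : ℤ × ℤ × ℤ) : ℤ :=
  p.1 * (q.2.1 * r.2.2 - q.2.2 * r.2.1) +
      p.2.1 * (q.2.2 * r.1 - q.1 * r.2.2) + p.2.2 * (q.1 * r.2.1 - q.2.1 * r.1)

lemma W3_real (α₁ α₂ : ℝ) (p q r : ℤ × ℤ × ℤ) : (W3 p q r : ℝ) =
    zform α₁ α₂ p * (q.2.1 * r.2.2 - q.2.2 * r.2.1) +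
      p.2.1 * (q.2.2 * zform α₁ α₂ r - zform α₁ α₂ q * r.2.2) +
      p.2.2 * (zform α₁ α₂ q * r.2.1 - q.2.1 * zform α₁ α₂ r) := by
  unfold W3 zform; push_cast; ring

lemma round_err (x t X : ℝ) (hx : |x| ≤ X) : |((round t : ℤ) - t) * x| ≤ X / 2 := by
  rw [abs_mul, abs_sub_comm]
  have := abs_sub_round t
  have h0 := abs_nonneg x
  nlinarith [abs_nonneg (t - round t)]

lemma hgt_real (n : ℤ × ℤ × ℤ) : |(n.2.1 : ℝ)| ≤ hgt n ∧ |(n.2.2 : ℝ)| ≤ hgt n := by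
  have := (hgt_le_iff n (hgt n)).1 le_rfl
  exact ⟨by exact_mod_cast this.1, by exact_mod_cast this.2⟩

lemma case1 (α₁ α₂ : ℝ) (hind : ZLinIndep α₁ α₂) (a b c : ℤ × ℤ × ℤ)
    (hab : ConsecutiveBest α₁ α₂ a b) (hbc : ConsecutiveBest α₁ α₂ b c)
    (hdet : W3 a b c ≠ 0) (h4 : (hgt c : ℝ) ≤ 4 * hgt b) :
    Goal2 α₁ α₂ (hgt b) (hgt c) := by
  have hA : (0:ℝ) < hgt a := by exact_mod_cast hab.1.1
  have hAB : (hgt a : ℝ) < hgt b := by exact_mod_cast hab.2.2.1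
  have hBC : (hgt b : ℝ) < hgt c := by exact_mod_cast hbc.2.2.1
  have hza := best_bound α₁ α₂ a b hab
  have hzab := strict_best α₁ α₂ hind a b hab
  have hzbc := strict_best α₁ α₂ hind b c hbc
  have hWr : (W3 a b c : ℝ) ≠ 0 := by exact_mod_cast hdet
  obtain ⟨t, u, e0, e1, e2⟩ := cramer _ _ _ _ _ _ _ _ _ _ (3 / 2 * hgt c : ℝ) hWr
    (W3_real α₁ α₂ a b c)
  set s := (3 / 2 * hgt c : ℝ) * (zform α₁ α₂ c * (b.2.2 - b.2.1) +
    zform α₁ α₂ b * (c.2.1 - c.2.2)) / W3 a b c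
  let n : ℤ × ℤ × ℤ := (round s * a.1 + round t * b.1 + round u * c.1,
    round s * a.2.1 + round t * b.2.1 + round u * c.2.1,
    round s * a.2.2 + round t * b.2.2 + round u * c.2.2)
  have ha := hgt_real a
  have hb := hgt_real b
  have hc := hgt_real c
  have n1 : (n.2.1 : ℝ) = 3 / 2 * hgt c + ((round s - s) * a.2.1 + (round t - t) * b.2.1 +
      (round u - u) * c.2.1) := by
    simp only [n]; push_cast; linear_combination e1
  have n2 : (n.2.2 : ℝ) = 3 / 2 * hgt c + ((round s - s) * a.2.2 + (round t - t) * b.2.2 +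
      (round u - u) * c.2.2) := by
    simp only [n]; push_cast; linear_combination e2
  have n0 : zform α₁ α₂ n = (round s - s) * zform α₁ α₂ a + (round t - t) * zform α₁ α₂ b +
      (round u - u) * zform α₁ α₂ c := by
    have : zform α₁ α₂ n = round s * zform α₁ α₂ a + round t * zform α₁ α₂ b +
      round u * zform α₁ α₂ c := by simp only [n, zform]; push_cast; ring
    linear_combination this + e0
  have a1 := abs_le.1 (round_err _ s _ ha.1)
  have a2 := abs_le.1 (round_err _ s _ ha.2)
  have b1 := abs_le.1 (round_err _ t _ hb.1)
  have b2 := abs_le.1 (round_err _ t _ hb.2)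
  have c1 := abs_le.1 (round_err _ u _ hc.1)
  have c2 := abs_le.1 (round_err _ u _ hc.2)
  have a0 := abs_le.1 (round_err _ s _ (le_refl |zform α₁ α₂ a|))
  have b0 := abs_le.1 (round_err _ t _ (le_refl |zform α₁ α₂ b|))
  have c0 := abs_le.1 (round_err _ u _ (le_refl |zform α₁ α₂ c|))
  refine goal_of_pos α₁ α₂ _ _ (3 * hgt c) (2 / (hgt b : ℝ) ^ 2) (by linarith) n ?_ ?_ ?_ ?_ ?_ ?_
    (num1 _ _ (by linarith) hBC.le h4)
  · have : (0:ℝ) < n.2.1 := by linarith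
    exact_mod_cast this
  · have : (0:ℝ) < n.2.2 := by linarith
    exact_mod_cast this
  · linarith
  · linarith
  · have : 2 / (hgt b : ℝ) ^ 2 = 3 / 2 * (4 / 3 / (hgt b : ℝ) ^ 2) := by ring
    rw [this, n0, abs_le]
    constructor <;> linarith
  · have := C_le_T (hgt b) (hgt c) (by linarith) hBC.le
    linarith

lemma caseII (α₁ α₂ : ℝ) (hind : ZLinIndep α₁ α₂) (b c : ℤ × ℤ × ℤ)
    (hbc : ConsecutiveBest α₁ α₂ b c)
    (hli : ∀ r s : ℤ, r * b.1 + s * c.1 = 0 → r * b.2.1 + s * c.2.1 = 0 →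
      r * b.2.2 + s * c.2.2 = 0 → r = 0 ∧ s = 0)
    (hG : |zform α₁ α₂ b| * hgt c ≤
      |zform α₁ α₂ c * (b.2.2 - b.2.1) + zform α₁ α₂ b * (c.2.1 - c.2.2)|)
    (hz : 1 / (hgt c * ((hgt c : ℝ) ^ tau * (hgt b : ℝ) ^ (1 - tau))) ≤ |zform α₁ α₂ b|) :
    Goal2 α₁ α₂ (hgt b) (hgt c) := by
  have hB : (0:ℝ) < hgt b := by exact_mod_cast hbc.1.1
  have hBC : (hgt b : ℝ) < hgt c := by exact_mod_cast hbc.2.2.1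
  have hC : (0:ℝ) < hgt c := hB.trans hBC
  have hzb := best_bound α₁ α₂ b c hbc
  have hzbc := strict_best α₁ α₂ hind b c hbc
  have hzp := zform_pos α₁ α₂ hind b hbc.1.1
  obtain ⟨v, hv⟩ := exists_compl α₁ α₂ hind b c hbc hli
  have hW : W3 v b c = 1 := hv
  set β := |zform α₁ α₂ b| with hβ
  set G0 := zform α₁ α₂ c * (b.2.2 - b.2.1) + zform α₁ α₂ b * (c.2.1 - c.2.2) with hG0
  have hGp : 0 < |G0| := lt_of_lt_of_le (by positivity) hG
  set y := 1 / (β * hgt c) with hy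
  have hyp : 0 < y := by positivity
  have hT : (0:ℝ) < (hgt c : ℝ) ^ tau * (hgt b : ℝ) ^ (1 - tau) :=
    mul_pos (Real.rpow_pos_of_pos hC _) (Real.rpow_pos_of_pos hB _)
  have hyT : y ≤ (hgt c : ℝ) ^ tau * (hgt b : ℝ) ^ (1 - tau) := by
    rw [hy, div_le_iff₀ (by positivity)]
    rw [div_le_iff₀ (by positivity)] at hz
    linarith
  have hCy : (hgt c : ℝ) ≤ 4 / 3 * y := by
    rw [hy, mul_one_div, le_div_iff₀ (by positivity)]
    rw [le_div_iff₀ (by positivity)] at hzb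
    linarith
  have hGy : 1 / |G0| ≤ y := one_div_le_one_div_of_le (by positivity) hG
  obtain ⟨m, hm⟩ : ∃ m : ℤ, m = ⌈hgt c * |G0|⌉ := ⟨_, rfl⟩
  have hm1 : (hgt c : ℝ) * |G0| ≤ m := by rw [hm]; exact Int.le_ceil _
  have hm2 : (m : ℝ) < hgt c * |G0| + 1 := by rw [hm]; exact Int.ceil_lt_add_one _
  set R := (m : ℝ) / |G0| with hR
  have hR1 : (hgt c : ℝ) ≤ R := by rw [hR, le_div_iff₀ hGp]; exact hm1
  have hR2 : R ≤ hgt c + 1 / |G0| := by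
    rw [hR, div_le_iff₀ hGp, add_mul, one_div_mul_cancel hGp.ne']; exact hm2.le
  have hWr : (W3 v b c : ℝ) ≠ 0 := by rw [hW]; norm_num
  obtain ⟨t, u, e0, e1, e2⟩ := cramer _ _ _ _ _ _ _ _ _ _ R hWr
    (W3_real α₁ α₂ v b c)
  obtain ⟨s, hs⟩ : ∃ s : ℤ, R * G0 / (W3 v b c : ℝ) = s := by
    rw [hW]
    rcases abs_choice G0 with h | h
    · refine ⟨m, ?_⟩
      rw [h] at hR hGp
      rw [hR]; field_simp; simp
    · refine ⟨-m, ?_⟩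
      rw [h] at hR hGp
      have : G0 ≠ 0 := by intro h0; rw [h0] at hGp; simp at hGp
      rw [hR]; field_simp; simp
  rw [hs] at e0 e1 e2
  let n : ℤ × ℤ × ℤ := (s * v.1 + round t * b.1 + round u * c.1,
    s * v.2.1 + round t * b.2.1 + round u * c.2.1,
    s * v.2.2 + round t * b.2.2 + round u * c.2.2)
  have hb := hgt_real b
  have hc := hgt_real c
  have n1 : (n.2.1 : ℝ) = R + ((round t - t) * b.2.1 + (round u - u) * c.2.1) := by
    simp only [n]; push_cast; linear_combination e1
  have n2 : (n.2.2 : ℝ) = R + ((round t - t) * b.2.2 + (round u - u) * c.2.2) := by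
    simp only [n]; push_cast; linear_combination e2
  have n0 : zform α₁ α₂ n = (round t - t) * zform α₁ α₂ b + (round u - u) * zform α₁ α₂ c := by
    have : zform α₁ α₂ n = s * zform α₁ α₂ v + round t * zform α₁ α₂ b +
      round u * zform α₁ α₂ c := by simp only [n, zform]; push_cast; ring
    linear_combination this + e0
  have b1 := abs_le.1 (round_err _ t _ hb.1)
  have b2 := abs_le.1 (round_err _ t _ hb.2)
  have c1 := abs_le.1 (round_err _ u _ hc.1)
  have c2 := abs_le.1 (round_err _ u _ hc.2)
  have b0 := abs_le.1 (round_err _ t _ (le_refl |zform α₁ α₂ b|))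
  have c0 := abs_le.1 (round_err _ u _ (le_refl |zform α₁ α₂ c|))
  refine goal_of_pos α₁ α₂ _ _ (4 * y) (1 / (y * hgt c)) hB n ?_ ?_ ?_ ?_ ?_ ?_
    (num3 _ _ _ hB hBC.le hyp hyT)
  · have : (0:ℝ) < n.2.1 := by linarith
    exact_mod_cast this
  · have : (0:ℝ) < n.2.2 := by linarith
    exact_mod_cast this
  · linarith
  · linarith
  · have : 1 / (y * hgt c) = β := by rw [hy]; field_simp
    rw [this, n0, abs_le]
    constructor <;> linarith
  · linarith

set_option maxHeartbeats 1600000 in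
lemma caseI (α₁ α₂ : ℝ) (hind : ZLinIndep α₁ α₂) (a b c : ℤ × ℤ × ℤ)
    (hab : ConsecutiveBest α₁ α₂ a b) (hbc : ConsecutiveBest α₁ α₂ b c)
    (hdet : W3 a b c ≠ 0) (h4 : 4 * (hgt b : ℝ) ≤ hgt c)
    (hb1 : 0 ≤ b.2.1) (hb2 : b.2.2 ≤ 0) (hc1 : 0 ≤ c.2.1) (hc2 : c.2.2 ≤ 0)
    (hz : |zform α₁ α₂ b| ≤ 1 / (hgt c * ((hgt c : ℝ) ^ tau * (hgt b : ℝ) ^ (1 - tau)))) :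
    Goal2 α₁ α₂ (hgt b) (hgt c) := by
  have hA : (0:ℝ) < hgt a := by exact_mod_cast hab.1.1
  have hAB : (hgt a : ℝ) < hgt b := by exact_mod_cast hab.2.2.1
  have hBC : (hgt b : ℝ) < hgt c := by exact_mod_cast hbc.2.2.1
  have hB := hA.trans hAB
  have hC := hB.trans hBC
  have hza := best_bound α₁ α₂ a b hab
  have hzbc := strict_best α₁ α₂ hind b c hbc
  have hCT := C_le_T (hgt b) (hgt c) hB hBC.le
  have ha := hgt_real a
  have hb := hgt_real b
  have hc := hgt_real c
  have hz2 : |zform α₁ α₂ b| * (hgt c : ℝ) ^ 2 ≤ 1 := by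
    rw [le_div_iff₀ (mul_pos hC (hC.trans_le hCT))] at hz
    refine le_trans ?_ hz
    rw [sq]; gcongr
  set A : ℝ := ((hgt a : ℤ) : ℝ)
  set B : ℝ := ((hgt b : ℤ) : ℝ) with hBdef
  set C : ℝ := ((hgt c : ℤ) : ℝ) with hCdef
  set ζa := zform α₁ α₂ a
  set ζb := zform α₁ α₂ b
  set ζc := zform α₁ α₂ c
  -- determinant estimate
  have hW1 : (1:ℝ) ≤ |(W3 a b c : ℝ)| := by exact_mod_cast Int.one_le_abs hdet
  rw [W3_real α₁ α₂ a b c] at hW1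
  set Δ : ℝ := |(b.2.1:ℝ) * c.2.2 - b.2.2 * c.2.1| with hΔ
  have t1 : ∀ x y : ℝ, |x| ≤ A → |y| ≤ C → |x * (ζb * y)| ≤ A * C * |ζb| := by
    intro x y hx hy
    rw [abs_mul, abs_mul]
    calc |x| * (|ζb| * |y|) ≤ A * (|ζb| * C) := by gcongr
      _ = _ := by ring
  have t2 : ∀ x y : ℝ, |x| ≤ A → |y| ≤ B → |x * (ζc * y)| ≤ A * B * |ζb| := by
    intro x y hx hy
    rw [abs_mul, abs_mul]
    calc |x| * (|ζc| * |y|) ≤ A * (|ζb| * B) := by gcongr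
      _ = _ := by ring
  have hest : 1 ≤ |ζa| * Δ + 2 * (A * C * |ζb|) + 2 * (A * B * |ζb|) := by
    have x1 := t1 _ _ ha.1 hc.2
    have x2 := t1 _ _ ha.2 hc.1
    have x3 := t2 _ _ ha.1 hb.2
    have x4 := t2 _ _ ha.2 hb.1
    have x5 : |ζa * ((b.2.1:ℝ) * c.2.2 - b.2.2 * c.2.1)| = |ζa| * Δ := abs_mul _ _
    refine hW1.trans ?_
    rw [← x5]
    have y1 := abs_le.1 x1
    have y2 := abs_le.1 x2
    have y3 := abs_le.1 x3
    have y4 := abs_le.1 x4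
    have y5 := le_abs_self (ζa * ((b.2.1:ℝ) * c.2.2 - b.2.2 * c.2.1))
    have y6 := neg_abs_le (ζa * ((b.2.1:ℝ) * c.2.2 - b.2.2 * c.2.1))
    rw [abs_le]
    constructor <;> linarith
  have hAC : A * C ≤ C ^ 2 / 4 := by nlinarith
  have hABC : A * B ≤ C ^ 2 / 16 := by nlinarith
  have f1 : A * C * |ζb| ≤ 1 / 4 := by nlinarith [abs_nonneg ζb]
  have f2 : A * B * |ζb| ≤ 1 / 16 := by nlinarith [abs_nonneg ζb]
  have f3 : 3 / 8 ≤ |ζa| * Δ := by linarith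
  have hΔ4 : B ^ 2 < 4 * Δ := by
    have : |ζa| * Δ ≤ 4 / 3 / B ^ 2 * Δ := by gcongr
    have h5 : 3 / 8 ≤ 4 / 3 / B ^ 2 * Δ := f3.trans this
    rw [div_mul_eq_mul_div, le_div_iff₀ (by positivity)] at h5
    nlinarith
  have hΔi : hgt b ^ 2 < 4 * |b.2.1 * c.2.2 - b.2.2 * c.2.1| := by
    rw [hBdef, hΔ] at hΔ4
    exact_mod_cast hΔ4
  -- heights as integers
  have hBi : hgt b = max b.2.1 (-b.2.2) := by
    unfold hgt; rw [abs_of_nonneg hb1, abs_of_nonpos hb2]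
  have hci := (hgt_le_iff c (hgt c)).1 le_rfl
  rw [abs_of_nonneg hc1, abs_of_nonpos hc2] at hci
  have hBCi := hbc.2.2.1
  have hBpos := hbc.1.1
  have fin : ∃ k : ℤ, 0 ≤ k ∧ k * hgt b ≤ 4 * hgt c + hgt b ∧
      0 < (4 * c.2.1 - k * b.2.1) * (4 * c.2.2 - k * b.2.2) ∧
      |4 * c.2.1 - k * b.2.1| ≤ 4 * hgt c ∧ |4 * c.2.2 - k * b.2.2| ≤ 4 * hgt c := by
    rcases le_total (-b.2.2) b.2.1 with hh | hh
    · rw [max_eq_left hh] at hBi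
      obtain ⟨k, k1, k2, k3, k4, k5⟩ := two_vec b.2.1 (-b.2.2) (4 * c.2.1) (4 * -c.2.2) (4 * hgt c)
        (by linarith) hh (by linarith) (by linarith) (by linarith) (by linarith) (by linarith)
        (by linarith) (by
          have e : b.2.1 * (4 * -c.2.2) - -b.2.2 * (4 * c.2.1) =
            -4 * (b.2.1 * c.2.2 - b.2.2 * c.2.1) := by ring
          rw [e, abs_mul]
          have : b.2.1 * -b.2.2 ≤ hgt b ^ 2 := by rw [hBi, sq]; gcongr
          have h4 : |(-4:ℤ)| = 4 := rfl
          rw [h4]; linarith)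
      refine ⟨k, k1, by rw [hBi]; exact k2, by nlinarith, k4, ?_⟩
      rw [← abs_neg]; convert k5 using 2; ring
    · rw [max_eq_right hh] at hBi
      obtain ⟨k, k1, k2, k3, k4, k5⟩ := two_vec (-b.2.2) b.2.1 (4 * -c.2.2) (4 * c.2.1) (4 * hgt c)
        (by linarith) hh (by linarith) (by linarith) (by linarith) (by linarith) (by linarith)
        (by linarith) (by
          have e : -b.2.2 * (4 * c.2.1) - b.2.1 * (4 * -c.2.2) =
            4 * (b.2.1 * c.2.2 - b.2.2 * c.2.1) := by ring
          rw [e, abs_mul]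
          have : -b.2.2 * b.2.1 ≤ hgt b ^ 2 := by
            rw [hBi, sq]; exact mul_le_mul_of_nonneg_left hh (by linarith)
          have h4 : |(4:ℤ)| = 4 := rfl
          rw [h4]; linarith)
      refine ⟨k, k1, by rw [hBi]; exact k2, by nlinarith, k5, ?_⟩
      rw [← abs_neg]; convert k4 using 2; ring
  obtain ⟨k, k1, k2, k3, k4, k5⟩ := fin
  refine goal_of_same α₁ α₂ B C (4 * C) (9 * (C / B) * |ζb|) hB
    (4 * c.1 - k * b.1, 4 * c.2.1 - k * b.2.1, 4 * c.2.2 - k * b.2.2) k3 ?_ ?_ ?_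
    (num2 _ _ _ hB hBC.le hz)
  · have := (hgt_le_iff (4 * c.1 - k * b.1, 4 * c.2.1 - k * b.2.1, 4 * c.2.2 - k * b.2.2)
      (4 * hgt c)).2 ⟨k4, k5⟩
    rw [hCdef]; exact_mod_cast this
  · have e : zform α₁ α₂ (4 * c.1 - k * b.1, 4 * c.2.1 - k * b.2.1, 4 * c.2.2 - k * b.2.2) =
        4 * ζc - k * ζb := by
      simp only [ζc, ζb, zform]; push_cast; ring
    rw [e]
    have hk0 : (0:ℝ) ≤ k := by exact_mod_cast k1
    have hkB : (k:ℝ) * B ≤ 4 * C + B := by rw [hBdef, hCdef]; exact_mod_cast k2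
    have g1 : |4 * ζc - k * ζb| ≤ 4 * |ζc| + k * |ζb| := by
      refine (abs_sub _ _).trans (le_of_eq ?_)
      rw [abs_mul, abs_mul, abs_of_nonneg hk0]; norm_num
    have g2 : (k:ℝ) ≤ 4 * (C / B) + 1 := by
      rw [← mul_div_assoc, div_add_one hB.ne', le_div_iff₀ hB]; exact hkB
    have g3 : 1 ≤ C / B := by rw [le_div_iff₀ hB]; linarith
    have g4 : (k:ℝ) * |ζb| ≤ (4 * (C / B) + 1) * |ζb| := by gcongr
    have g5 : |ζb| ≤ C / B * |ζb| := le_mul_of_one_le_left (abs_nonneg _) g3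
    have g6 : (4 * (C / B) + 1) * |ζb| = 4 * (C / B * |ζb|) + |ζb| := by ring
    have g7 : 9 * (C / B) * |ζb| = 9 * (C / B * |ζb|) := by ring
    rw [g7]
    linarith
  · linarith

lemma main_signed (α₁ α₂ : ℝ) (hind : ZLinIndep α₁ α₂) (a b c : ℤ × ℤ × ℤ)
    (hab : ConsecutiveBest α₁ α₂ a b) (hbc : ConsecutiveBest α₁ α₂ b c)
    (hdet : W3 a b c ≠ 0)
    (hb1 : 0 ≤ b.2.1) (hb2 : b.2.2 ≤ 0) (hc1 : 0 ≤ c.2.1) (hc2 : c.2.2 ≤ 0) :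
    Goal2 α₁ α₂ (hgt b) (hgt c) := by
  have hB : (0:ℝ) < hgt b := by exact_mod_cast hbc.1.1
  have hBC : (hgt b : ℝ) < hgt c := by exact_mod_cast hbc.2.2.1
  have hBpos := hbc.1.1
  have hBCi := hbc.2.2.1
  have hCT := C_le_T (hgt b) (hgt c) hB hBC.le
  rcases le_total (hgt c : ℝ) (4 * hgt b) with h4 | h4
  · exact case1 α₁ α₂ hind a b c hab hbc hdet h4
  rcases le_total (|zform α₁ α₂ b|)
    (1 / (hgt c * ((hgt c : ℝ) ^ tau * (hgt b : ℝ) ^ (1 - tau)))) with hz | hz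
  · exact caseI α₁ α₂ hind a b c hab hbc hdet h4 hb1 hb2 hc1 hc2 hz
  have hli : ∀ r s : ℤ, r * b.1 + s * c.1 = 0 → r * b.2.1 + s * c.2.1 = 0 →
      r * b.2.2 + s * c.2.2 = 0 → r = 0 ∧ s = 0 := by
    intro r s h0 h1 h2
    have hr : r * W3 a b c = 0 := by
      unfold W3
      linear_combination (a.2.1 * (-c.2.2) + a.2.2 * c.2.1) * h0 +
        (a.1 * c.2.2 - a.2.2 * c.1) * h1 + (a.2.1 * c.1 - a.1 * c.2.1) * h2
    have hs : s * W3 a b c = 0 := by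
      unfold W3
      linear_combination (a.2.1 * b.2.2 - a.2.2 * b.2.1) * h0 +
        (a.2.2 * b.1 - a.1 * b.2.2) * h1 + (a.1 * b.2.1 - a.2.1 * b.1) * h2
    exact ⟨(mul_eq_zero.1 hr).resolve_right hdet, (mul_eq_zero.1 hs).resolve_right hdet⟩
  have hzbc := strict_best α₁ α₂ hind b c hbc
  have hzb := best_bound α₁ α₂ b c hbc
  have hzc := zform_pos α₁ α₂ hind c hbc.2.1.1
  have hbB := (hgt_le_iff b (hgt b)).1 le_rfl
  have hcC := (hgt_le_iff c (hgt c)).1 le_rfl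
  rw [abs_of_nonneg hb1, abs_of_nonpos hb2] at hbB
  rw [abs_of_nonneg hc1, abs_of_nonpos hc2] at hcC
  have hBm : hgt b = b.2.1 ∨ hgt b = -b.2.2 := by
    unfold hgt; rw [abs_of_nonneg hb1, abs_of_nonpos hb2]; exact max_choice _ _
  have hCm : hgt c = c.2.1 ∨ hgt c = -c.2.2 := by
    unfold hgt; rw [abs_of_nonneg hc1, abs_of_nonpos hc2]; exact max_choice _ _
  have rb1 : (0:ℝ) ≤ b.2.1 := by exact_mod_cast hb1
  have rb2 : (b.2.2:ℝ) ≤ 0 := by exact_mod_cast hb2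
  have rc1 : (0:ℝ) ≤ c.2.1 := by exact_mod_cast hc1
  have rc2 : (c.2.2:ℝ) ≤ 0 := by exact_mod_cast hc2
  have hsumc : (hgt c : ℝ) ≤ c.2.1 - c.2.2 := by
    have : hgt c ≤ c.2.1 - c.2.2 := by omega
    exact_mod_cast this
  set β := zform α₁ α₂ b with hβ
  set γ := zform α₁ α₂ c with hγ
  by_cases hsign : β * γ ≤ 0
  · refine caseII α₁ α₂ hind b c hbc hli ?_ hz
    rw [← hβ, ← hγ]
    have e1 : |β| * hgt c ≤ |β| * (c.2.1 - c.2.2) := by gcongr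
    refine e1.trans ?_
    have hd : (0:ℝ) ≤ b.2.1 - b.2.2 := by linarith
    have hd' : (0:ℝ) ≤ c.2.1 - c.2.2 := by linarith
    rcases le_total 0 β with hp | hp
    · rw [abs_of_nonneg hp]
      rcases hp.lt_or_eq with hp' | hp'
      · have hg : γ ≤ 0 := by by_contra hh; push Not at hh; nlinarith
        refine le_trans ?_ (le_abs_self _)
        nlinarith
      · rw [← hp']; simp; positivity
    · rw [abs_of_nonpos hp]
      rcases hp.lt_or_eq with hp' | hp'
      · have hg : 0 ≤ γ := by by_contra hh; push Not at hh; nlinarith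
        refine le_trans ?_ (neg_le_abs _)
        nlinarith
      · rw [hp']; simp; positivity
  · push Not at hsign
    let n : ℤ × ℤ × ℤ := (c.1 - b.1, c.2.1 - b.2.1, c.2.2 - b.2.2)
    have hn : zform α₁ α₂ n = γ - β := by
      simp only [n, zform, hβ, hγ]; push_cast; ring
    have hnlt : |zform α₁ α₂ n| < |β| := by
      rw [hn]
      rcases lt_trichotomy β 0 with hp | hp | hp
      · have hg : γ < 0 := by by_contra hh; push Not at hh; nlinarith
        rw [abs_of_neg hp, abs_of_neg hg] at hzbc
        rw [abs_of_neg hp, abs_lt]; constructor <;> linarith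
      · rw [hp] at hsign; simp at hsign
      · have hg : 0 < γ := by by_contra hh; push Not at hh; nlinarith
        rw [abs_of_pos hp, abs_of_pos hg] at hzbc
        rw [abs_of_pos hp, abs_lt]; constructor <;> linarith
    have hn0 : 0 < hgt n := by
      rw [hgt_pos_iff]; simp only [n]; omega
    have hnC : hgt c ≤ hgt n := by
      by_contra hh
      push Not at hh
      exact absurd (next_best α₁ α₂ b c hbc n hn0 hh) (not_le.2 hnlt)
    have hnC' : hgt c ≤ |c.2.1 - b.2.1| ∨ hgt c ≤ |c.2.2 - b.2.2| := by
      unfold hgt at hnC ⊢; exact le_max_iff.1 hnC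
    have hnU : hgt n ≤ hgt c := by
      rw [hgt_le_iff, abs_le, abs_le]; simp only [n]; omega
    by_cases hsame : 0 < n.2.1 * n.2.2
    · refine goal_of_same α₁ α₂ _ _ (hgt c) (4 / 3 / (hgt c : ℝ) ^ 2) hB n hsame
        (by exact_mod_cast hnU) (hnlt.le.trans hzb) (by linarith) (num0 _ _ hB hBC.le)
    · have hsum : hgt c + (b.2.1 - b.2.2) ≤ c.2.1 - c.2.2 := by
        simp only [n] at hsame
        rcases hnC' with h | h
        · have q1 : c.2.1 = hgt c ∧ b.2.1 = 0 := by
            rcases abs_cases (c.2.1 - b.2.1) with ⟨h', _⟩ | ⟨h', _⟩ <;> omega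
          have q2 : c.2.2 - b.2.2 ≤ 0 := by
            by_contra hh; push Not at hh
            exact hsame (mul_pos (by omega) hh)
          omega
        · have q1 : c.2.2 = -hgt c ∧ b.2.2 = 0 := by
            rcases abs_cases (c.2.2 - b.2.2) with ⟨h', _⟩ | ⟨h', _⟩ <;> omega
          have q2 : 0 ≤ c.2.1 - b.2.1 := by
            by_contra hh; push Not at hh
            exact hsame (mul_pos_of_neg_of_neg hh (by omega))
          omega
      have hsumr : (hgt c : ℝ) + (b.2.1 - b.2.2) ≤ c.2.1 - c.2.2 := by exact_mod_cast hsum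
      refine caseII α₁ α₂ hind b c hbc hli ?_ hz
      rw [← hβ, ← hγ]
      have hd : (0:ℝ) ≤ b.2.1 - b.2.2 := by linarith
      have f1 : |β| * (hgt c + (b.2.1 - b.2.2)) ≤ |β| * (c.2.1 - c.2.2) := by gcongr
      have f2 : |γ| * (b.2.1 - b.2.2) ≤ |β| * (b.2.1 - b.2.2) := by gcongr
      have f3 : |β * (c.2.1 - c.2.2)| - |γ * (b.2.1 - b.2.2)| ≤
          |β * (c.2.1 - c.2.2) - γ * (b.2.1 - b.2.2)| := abs_sub_abs_le_abs_sub _ _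
      rw [abs_mul, abs_mul, abs_of_nonneg hd, abs_of_nonneg (show (0:ℝ) ≤ c.2.1 - c.2.2 by linarith)]
        at f3
      have f4 : γ * (b.2.2 - b.2.1) + β * (c.2.1 - c.2.2) =
        β * (c.2.1 - c.2.2) - γ * (b.2.1 - b.2.2) := by ring
      rw [f4]
      nlinarith

lemma best_neg {α₁ α₂ : ℝ} {b : ℤ × ℤ × ℤ} (h : IsBestApprox α₁ α₂ b) :
    IsBestApprox α₁ α₂ (-b) := by
  unfold IsBestApprox at *
  rwa [hgt_neg, zform_neg, abs_neg]

lemma cons_neg_left {α₁ α₂ : ℝ} {b c : ℤ × ℤ × ℤ} (h : ConsecutiveBest α₁ α₂ b c) :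
    ConsecutiveBest α₁ α₂ (-b) c := by
  obtain ⟨h1, h2, h3, h4⟩ := h
  refine ⟨best_neg h1, h2, ?_, ?_⟩ <;> rwa [hgt_neg]

lemma cons_neg_right {α₁ α₂ : ℝ} {b c : ℤ × ℤ × ℤ} (h : ConsecutiveBest α₁ α₂ b c) :
    ConsecutiveBest α₁ α₂ b (-c) := by
  obtain ⟨h1, h2, h3, h4⟩ := h
  refine ⟨h1, best_neg h2, ?_, ?_⟩ <;> rwa [hgt_neg]

lemma sign_cases (n : ℤ × ℤ × ℤ) (h : ¬ 0 < n.2.1 * n.2.2) :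
    (0 ≤ n.2.1 ∧ n.2.2 ≤ 0) ∨ (0 ≤ (-n).2.1 ∧ (-n).2.2 ≤ 0) := by
  rcases mul_nonpos_iff.1 (not_lt.1 h) with h | h
  · exact Or.inl h
  · right; simpa using h

lemma main (α₁ α₂ : ℝ) (hind : ZLinIndep α₁ α₂) (a b c : ℤ × ℤ × ℤ)
    (hab : ConsecutiveBest α₁ α₂ a b) (hbc : ConsecutiveBest α₁ α₂ b c)
    (hdet : W3 a b c ≠ 0) : Goal2 α₁ α₂ (hgt b) (hgt c) := by
  have hB : (0:ℝ) < hgt b := by exact_mod_cast hbc.1.1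
  have hBC : (hgt b : ℝ) < hgt c := by exact_mod_cast hbc.2.2.1
  have hCT := C_le_T (hgt b) (hgt c) hB hBC.le
  have hzb := best_bound α₁ α₂ b c hbc
  have hzbc := strict_best α₁ α₂ hind b c hbc
  by_cases sb : 0 < b.2.1 * b.2.2
  · exact goal_of_same α₁ α₂ _ _ (hgt c) (4 / 3 / (hgt c : ℝ) ^ 2) hB b sb hBC.le hzb
      (by linarith) (num0 _ _ hB hBC.le)
  by_cases sc : 0 < c.2.1 * c.2.2
  · exact goal_of_same α₁ α₂ _ _ (hgt c) (4 / 3 / (hgt c : ℝ) ^ 2) hB c sc le_rfl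
      (hzbc.le.trans hzb) (by linarith) (num0 _ _ hB hBC.le)
  have w1 : W3 a (-b) c = - W3 a b c := by simp [W3]; ring
  have w2 : ∀ b', W3 a b' (-c) = - W3 a b' c := by intro b'; simp [W3]; ring
  rcases sign_cases b sb with ⟨p, q⟩ | ⟨p, q⟩ <;> rcases sign_cases c sc with ⟨p', q'⟩ | ⟨p', q'⟩
  · exact main_signed α₁ α₂ hind a b c hab hbc hdet p q p' q'
  · have := main_signed α₁ α₂ hind a b (-c) hab (cons_neg_right hbc)
      (by rw [w2]; exact neg_ne_zero.2 hdet) p q p' q'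
    rwa [hgt_neg] at this
  · have := main_signed α₁ α₂ hind a (-b) c (cons_neg_right hab) (cons_neg_left hbc)
      (by rw [w1]; exact neg_ne_zero.2 hdet) p q p' q'
    rwa [hgt_neg] at this
  · have := main_signed α₁ α₂ hind a (-b) (-c) (cons_neg_right hab)
      (cons_neg_left (cons_neg_right hbc))
      (by rw [w2, w1, neg_neg]; exact hdet) p q p' q'
    rwa [hgt_neg, hgt_neg] at this

end T3

/-- Theorem 3: for best approximations a = m_{ν−1}, b = m_ν, c = m_{ν+1}, d = m_{ν+2} with
det(m_{ν−1}, m_ν, m_{ν+1}) ≠ 0, either (i) or (ii) holds. -/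
theorem theorem3 (α₁ α₂ : ℝ) (h : ZLinIndep α₁ α₂)
    (a b c d : ℤ × ℤ × ℤ)
    (hab : ConsecutiveBest α₁ α₂ a b) (hbc : ConsecutiveBest α₁ α₂ b c)
    (hcd : ConsecutiveBest α₁ α₂ c d)
    (hdet : Matrix.det !![a.1, a.2.1, a.2.2; b.1, b.2.1, b.2.2; c.1, c.2.1, c.2.2] ≠ 0) :
    (∃ x : ℤ × ℤ, 0 < x.1 ∧ 0 < x.2 ∧
        (hgt d : ℝ) ≤ ((max x.1 x.2 : ℤ) : ℝ) ∧
        ((max x.1 x.2 : ℤ) : ℝ) ≤ 4 * (hgt d : ℝ) ∧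
        nint (α₁ * x.1 + α₂ * x.2) ≤ 16 * ((max x.1 x.2 : ℤ) : ℝ) ^ (-2 : ℝ)) ∨
    (∃ x : ℤ × ℤ, 0 < x.1 ∧ 0 < x.2 ∧
        ((max x.1 x.2 : ℤ) : ℝ) ≤ 240 * (hgt c : ℝ) ^ tau * (hgt b : ℝ) ^ (-(1 / tau)) ∧
        nint (α₁ * x.1 + α₂ * x.2) ≤
          24 ^ tau * (hgt b : ℝ) ^ ((1 - tau) / tau) * ((max x.1 x.2 : ℤ) : ℝ) ^ (-tau)) := by
  right
  refine T3.main α₁ α₂ h a b c hab hbc ?_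
  intro h0
  apply hdet
  rw [Matrix.det_fin_three]
  unfold T3.W3 at h0
  simp
  linear_combination h0
end

section
/- Let 1, α₁, α₂ be linearly independent over ℤ and let m_ν, m_{ν+1} be two consecutive best approximations. Then ζ_ν · M_{ν+1}² ≤ 1. -/
/-- Every integer vector of positive height below the height of `m'` has value at least `|ζ(m)|`. -/
theorem consecutive_lower (α₁ α₂ : ℝ)
    (m m' : ℤ × ℤ × ℤ) (hc : ConsecutiveBest α₁ α₂ m m') (n : ℤ × ℤ × ℤ)
    (hn : 0 < hgt n) (hn' : hgt n < hgt m') :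
    |zform α₁ α₂ m| ≤ |zform α₁ α₂ n| := by
  classical
  obtain ⟨hm, hm', hlt, hno⟩ := hc
  let X := hgt m'
  let S : Finset (ℤ × ℤ) :=
    ((Finset.Icc (-X) X) ×ˢ (Finset.Icc (-X) X)).filter
      (fun p => 0 < hgt (0, p) ∧ hgt (0, p) < X)
  have memS : ∀ k : ℤ × ℤ × ℤ, 0 < hgt k → hgt k < X → k.2 ∈ S := by
    intro k h1 h2
    have h3 : |k.2.1| ≤ X := le_trans (le_max_left _ _) h2.le
    have h4 : |k.2.2| ≤ X := le_trans (le_max_right _ _) h2.le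
    simp only [S, Finset.mem_filter, Finset.mem_product, Finset.mem_Icc]
    exact ⟨⟨abs_le.mp h3, abs_le.mp h4⟩, h1, h2⟩
  let v : ℤ × ℤ → ℝ := fun p => p.1 * α₁ + p.2 * α₂
  obtain ⟨p, hpS, hpmin⟩ := S.exists_min_image (fun p => |v p - round (v p)|)
    ⟨n.2, memS n hn hn'⟩
  let q : ℤ × ℤ × ℤ := (-round (v p), p)
  have hq : |zform α₁ α₂ q| = |v p - round (v p)| := by
    congr 1
    simp only [zform, q, v]
    push_cast
    ring
  have hp2 := (Finset.mem_filter.mp hpS).2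
  have hle : ∀ k : ℤ × ℤ × ℤ, 0 < hgt k → hgt k < X →
      |zform α₁ α₂ q| ≤ |zform α₁ α₂ k| := by
    intro k h1 h2
    rw [hq]
    refine (hpmin k.2 (memS k h1 h2)).trans ?_
    have := round_le (v k.2) (-k.1)
    refine this.trans (le_of_eq ?_)
    congr 1
    simp only [zform, v]
    push_cast
    ring
  have hqb : IsBestApprox α₁ α₂ q :=
    ⟨hp2.1, fun k h1 h2 => hle k h1 (lt_of_le_of_lt h2 hp2.2)⟩
  rcases hno q hqb with h1 | h1
  · exact (hm.2 q hp2.1 h1).trans (hle n hn hn')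
  · exact absurd hp2.2 (not_lt.mpr h1)

/-- For consecutive best approximations `m = m_ν`, `m' = m_{ν+1}`: ζ_ν · M_{ν+1}² ≤ 1. -/
theorem zeta_mul_sq_height_le_one (α₁ α₂ : ℝ) (h : ZLinIndep α₁ α₂)
    (m m' : ℤ × ℤ × ℤ) (hc : ConsecutiveBest α₁ α₂ m m') :
    |zform α₁ α₂ m| * (hgt m' : ℝ) ^ 2 ≤ 1 := by
  by_contra hcon
  push Not at hcon
  have low := consecutive_lower α₁ α₂ m m' hc
  obtain ⟨hm, hm', hlt, -⟩ := hc
  generalize hz : |zform α₁ α₂ m| = z at *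
  have hz0 : 0 ≤ z := hz ▸ abs_nonneg _
  have hzpos : 0 < z := by
    rcases hz0.eq_or_lt with h0 | h0
    · rw [← h0] at hcon
      norm_num at hcon
    · exact h0
  have hmpos : 0 < hgt m := hm.1
  obtain ⟨X, hX⟩ := Int.eq_ofNat_of_zero_le (hmpos.trans hlt).le
  rw [hX] at hlt low hcon
  have hX2 : 2 ≤ X := by omega
  have hz1 : z ≤ 1 := by
    have h1 := low (-⌊α₁⌋, 1, 0) (by simp [hgt]) (by simp [hgt]; omega)
    have h2 : zform α₁ α₂ (-⌊α₁⌋, 1, 0) = Int.fract α₁ := by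
      simp only [zform, Int.fract]
      push_cast
      ring
    rw [h2, abs_of_nonneg (Int.fract_nonneg _)] at h1
    exact h1.trans (Int.fract_lt_one _).le
  let v : ℕ × ℕ → ℝ := fun p => p.1 * α₁ + p.2 * α₂
  let S : Finset (ℕ × ℕ) := Finset.range X ×ˢ Finset.range X
  have hfr : ∀ p ∈ S, Int.fract (v p) ≤ 1 - z := by
    rintro ⟨a, b⟩ hp
    simp only [S, Finset.mem_product, Finset.mem_range] at hp
    by_cases h0 : a = 0 ∧ b = 0
    · obtain ⟨rfl, rfl⟩ := h0
      simp [v, hz1]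
    · have h1 := low (-⌊v (a, b)⌋ - 1, a, b)
        (by simp only [hgt, Nat.abs_cast]; omega) (by simp only [hgt, Nat.abs_cast]; omega)
      have h2 : zform α₁ α₂ (-⌊v (a, b)⌋ - 1, a, b) = Int.fract (v (a, b)) - 1 := by
        simp only [zform, Int.fract, v]
        push_cast
        ring
      rw [h2, abs_of_nonpos (by linarith [Int.fract_lt_one (v (a, b))])] at h1
      linarith
  have hmaps : ∀ p ∈ S, ⌊Int.fract (v p) / z⌋₊ ∈ Finset.range (X ^ 2 - 1) := by
    intro p hp
    rw [Finset.mem_range, Nat.floor_lt (div_nonneg (Int.fract_nonneg _) hz0), div_lt_iff₀ hzpos,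
      Nat.cast_sub (Nat.one_le_pow _ _ (by omega))]
    have := hfr p hp
    push_cast at hcon ⊢
    linarith
  have hcard : (Finset.range (X ^ 2 - 1)).card < S.card := by
    simp only [S, Finset.card_product, Finset.card_range]
    have := Nat.one_le_pow 2 X (by omega)
    rw [← sq]
    omega
  obtain ⟨p, hp, q, hq, hne, heq⟩ := Finset.exists_ne_map_eq_of_card_lt_of_maps_to hcard hmaps
  obtain ⟨a, b⟩ := p
  obtain ⟨c, d⟩ := q
  have hd : |Int.fract (v (a, b)) - Int.fract (v (c, d))| < z := by
    have e1 := Nat.floor_le (div_nonneg (Int.fract_nonneg (v (a, b))) hz0)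
    have e2 := Nat.lt_floor_add_one (Int.fract (v (a, b)) / z)
    have e3 := Nat.floor_le (div_nonneg (Int.fract_nonneg (v (c, d))) hz0)
    have e4 := Nat.lt_floor_add_one (Int.fract (v (c, d)) / z)
    rw [heq] at e1 e2
    rw [le_div_iff₀ hzpos] at e1 e3
    rw [div_lt_iff₀ hzpos] at e2 e4
    rw [abs_lt]
    constructor <;> linarith
  simp only [S, Finset.mem_product, Finset.mem_range] at hp hq
  have hne' : ¬ (a = c ∧ b = d) := fun h => hne (by rw [h.1, h.2])
  have h1 := low (⌊v (c, d)⌋ - ⌊v (a, b)⌋, (a : ℤ) - c, (b : ℤ) - d)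
    (by simp only [hgt, lt_max_iff, abs_pos]; omega)
    (by simp only [hgt, max_lt_iff, abs_lt]; omega)
  have h2 : zform α₁ α₂ (⌊v (c, d)⌋ - ⌊v (a, b)⌋, (a : ℤ) - c, (b : ℤ) - d)
      = Int.fract (v (a, b)) - Int.fract (v (c, d)) := by
    simp only [zform, Int.fract, v]
    push_cast
    ring
  rw [h2] at h1
  linarith
end

section
/- Let 1, α₁, α₂ be linearly independent over ℤ, let m_ν, m_{ν+1} be two consecutive best approximations, and put R_ν = 2·(M_{ν+1}·ζ_ν)^{−1}. Then there exists an integer point (x₁⁰, x₂⁰) such that x₁⁰ > 0, x₂⁰ > 0, max{x₁⁰, x₂⁰} ≤ R_ν, and ‖α₁x₁⁰ + α₂x₂⁰‖ < ζ_ν. -/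
open MeasureTheory in
/-- Minkowski's theorem for the three forms `ζ(n)`, `n₁ - n₂`, `n₁ + n₂` (determinant 2). -/
lemma mink (α₁ α₂ A B C : ℝ) (hA : 0 < A) (hB : 0 < B) (hC : 0 < C) (hABC : 2 < A * B * C) :
    ∃ a b c : ℤ, ¬ (a = 0 ∧ b = 0 ∧ c = 0) ∧ |(a : ℝ) + b * α₁ + c * α₂| < A ∧
      |(b : ℝ) - c| < B ∧ |(b : ℝ) + c| < C := by
  set V : Matrix (Fin 3) (Fin 3) ℝ := !![1, 0, 0; α₁, 1, 1; α₂, -1, 1] with hV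
  have hdet : V.det = 2 := by
    rw [hV, Matrix.det_fin_three]; simp; norm_num
  have hli : LinearIndependent ℝ V.row := by
    rw [Matrix.linearIndependent_rows_iff_isUnit, Matrix.isUnit_iff_isUnit_det, hdet]
    simp
  let b := basisOfLinearIndependentOfCardEqFinrank hli (by simp)
  have hb : (b : Fin 3 → Fin 3 → ℝ) = V.row := coe_basisOfLinearIndependentOfCardEqFinrank _ _
  have hvol : volume (ZSpan.fundamentalDomain b) = ENNReal.ofReal 2 := by
    rw [ZSpan.volume_fundamentalDomain, hb]
    have : (Matrix.of V.row) = V := rfl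
    rw [this, hdet]; simp
  let u : Fin 3 → ℝ := ![A, B, C]
  let s : Set (Fin 3 → ℝ) := Set.univ.pi fun i => Set.Ioo (-u i) (u i)
  have hs : volume s = ENNReal.ofReal (8 * (A * B * C)) := by
    rw [Real.volume_pi_Ioo, ← ENNReal.ofReal_prod_of_nonneg]
    · congr 1
      simp [Fin.prod_univ_three, u]; ring
    · intro i _
      fin_cases i <;> simp [u] <;> linarith
  have : Countable (Submodule.span ℤ (Set.range b)).toAddSubgroup :=
    inferInstanceAs (Countable (Submodule.span ℤ (Set.range b)))
  obtain ⟨x, hx0, hxs⟩ := exists_ne_zero_mem_lattice_of_measure_mul_two_pow_lt_measure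
    (ZSpan.isAddFundamentalDomain' b volume) (s := s)
    (by
      intro x hx i hi
      have := hx i hi
      simp only [Set.mem_Ioo, Pi.neg_apply] at this ⊢
      constructor <;> linarith)
    (convex_pi fun i _ => convex_Ioo _ _)
    (by
      rw [hvol, hs]
      have : (2 : ENNReal) ^ Module.finrank ℝ (Fin 3 → ℝ) = ENNReal.ofReal 8 := by
        rw [Module.finrank_fin_fun]; norm_num
      rw [this, ← ENNReal.ofReal_mul (by norm_num)]
      exact (ENNReal.ofReal_lt_ofReal_iff (by positivity)).2 (by linarith))
  obtain ⟨x, hxL⟩ := x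
  have hxL' : x ∈ Submodule.span ℤ (Set.range b) := hxL
  rw [Submodule.mem_span_range_iff_exists_fun] at hxL'
  obtain ⟨c, hc⟩ := hxL'
  rw [hb] at hc
  have key : ∀ i, x i = c 0 * V 0 i + c 1 * V 1 i + c 2 * V 2 i := by
    intro i
    rw [← hc]; simp [Fin.sum_univ_three, Matrix.row]
  have k0 := key 0
  have k1 := key 1
  have k2 := key 2
  have s0 := hxs 0 (Set.mem_univ _)
  have s1 := hxs 1 (Set.mem_univ _)
  have s2 := hxs 2 (Set.mem_univ _)
  simp [hV] at k0 k1 k2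
  simp [u, k0, k1, k2] at s0 s1 s2
  refine ⟨c 0, c 1, c 2, ?_, abs_lt.2 s0, abs_lt.2 ⟨by linarith, by linarith⟩, abs_lt.2 s2⟩
  rintro ⟨h0, h1, h2⟩
  apply hx0
  apply Subtype.ext
  funext i
  simp [key i, h0, h1, h2]

/-- Below every integer vector of positive height there is a best approximation. -/
lemma exists_best (α₁ α₂ : ℝ) (n : ℤ × ℤ × ℤ) (hn : 0 < hgt n) :
    ∃ p, IsBestApprox α₁ α₂ p ∧ hgt p ≤ hgt n ∧ |zform α₁ α₂ p| ≤ |zform α₁ α₂ n| := by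
  let lift : ℤ × ℤ → ℤ × ℤ × ℤ := fun q => (-round (q.1 * α₁ + q.2 * α₂), q.1, q.2)
  have hlift : ∀ k : ℤ × ℤ × ℤ, |zform α₁ α₂ (lift k.2)| ≤ |zform α₁ α₂ k| := by
    intro k
    have := round_le (k.2.1 * α₁ + k.2.2 * α₂) (-k.1)
    simp only [zform, lift]
    push_cast at this ⊢
    exact le_of_eq_of_le (congrArg abs (by ring)) (this.trans_eq (congrArg abs (by ring)))
  let S : Finset (ℤ × ℤ) :=
    (Finset.Icc (-hgt n) (hgt n) ×ˢ Finset.Icc (-hgt n) (hgt n)).filter (fun q => 0 < hgt (0, q))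
  have hmem : ∀ k : ℤ × ℤ × ℤ, k.2 ∈ S ↔ 0 < hgt k ∧ hgt k ≤ hgt n := by
    intro k
    have : hgt k ≤ hgt n ↔ |k.2.1| ≤ hgt n ∧ |k.2.2| ≤ hgt n := max_le_iff
    rw [this]
    simp only [S, Finset.mem_filter, Finset.mem_product, Finset.mem_Icc, abs_le]
    have : hgt (0, k.2) = hgt k := rfl
    rw [this]; tauto
  obtain ⟨q, hq, hmin⟩ := S.exists_min_image (fun q => |zform α₁ α₂ (lift q)|)
    ⟨n.2, (hmem n).2 ⟨hn, le_rfl⟩⟩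
  have hq' := (hmem (lift q)).1 hq
  refine ⟨lift q, ⟨hq'.1, fun k hk hk' => ?_⟩, hq'.2, ?_⟩
  · exact (hmin k.2 ((hmem k).2 ⟨hk, hk'.trans hq'.2⟩)).trans (hlift k)
  · exact (hmin n.2 ((hmem n).2 ⟨hn, le_rfl⟩)).trans (hlift n)

/-- Lemma 1: with `R_ν = 2(M_{ν+1}ζ_ν)⁻¹` there is an integer point with positive
coordinates, height ≤ R_ν, and ‖α₁x₁⁰ + α₂x₂⁰‖ < ζ_ν. -/
theorem lemma1_positive_point (α₁ α₂ : ℝ) (h : ZLinIndep α₁ α₂)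
    (m m' : ℤ × ℤ × ℤ) (hc : ConsecutiveBest α₁ α₂ m m') :
    ∃ x : ℤ × ℤ, 0 < x.1 ∧ 0 < x.2 ∧
      ((max x.1 x.2 : ℤ) : ℝ) ≤ 2 * ((hgt m' : ℝ) * |zform α₁ α₂ m|)⁻¹ ∧
      nint (α₁ * x.1 + α₂ * x.2) < |zform α₁ α₂ m| := by
  obtain ⟨hm, hm', hlt, hcons⟩ := hc
  have hM : 0 < hgt m' := hm'.1
  have hMR : (0 : ℝ) < hgt m' := by exact_mod_cast hM
  have hz : 0 < |zform α₁ α₂ m| := by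
    rw [abs_pos]
    intro h0
    obtain ⟨-, h1, h2⟩ := h _ _ _ h0
    have := hm.1
    simp [hgt, h1, h2] at this
  have hz1 : |zform α₁ α₂ m| < 1 := by
    have h1 := hm.2 (-round (m.2.1 * α₁ + m.2.2 * α₂), m.2) hm.1 le_rfl
    have h2 := abs_sub_round (m.2.1 * α₁ + m.2.2 * α₂)
    have h3 : zform α₁ α₂ (-round (m.2.1 * α₁ + m.2.2 * α₂), m.2) =
        m.2.1 * α₁ + m.2.2 * α₂ - round (m.2.1 * α₁ + m.2.2 * α₂) := by
      simp only [zform]; push_cast; ring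
    rw [h3] at h1
    linarith
  -- no integer point in the small parallelepiped
  have hempty : ∀ n : ℤ × ℤ × ℤ, 0 < hgt n → |zform α₁ α₂ n| < |zform α₁ α₂ m| →
      hgt m' ≤ hgt n := by
    intro n hn hnz
    obtain ⟨p, hp, hpn, hpz⟩ := exists_best α₁ α₂ n hn
    rcases hcons p hp with h1 | h1
    · have := hm.2 p hp.1 h1
      linarith
    · exact h1.trans hpn
  set ζ := |zform α₁ α₂ m| with hζ
  set M := hgt m' with hMdef
  set R : ℝ := 2 * ((M : ℝ) * ζ)⁻¹ with hR
  have hMζ : 0 < (M : ℝ) * ζ := mul_pos hMR hz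
  have hRpos : 0 < R := by positivity
  have hRM : ζ * M * R = 2 := by rw [hR]; field_simp
  obtain ⟨a, b, c, hne, h1, h2, h3⟩ := mink α₁ α₂ ζ M (R + 1) hz hMR (by linarith)
    (by nlinarith)
  have hpos : 0 < hgt (a, b, c) := by
    by_contra hcon
    have hb : |b| ≤ 0 := (le_max_left |b| |c|).trans (not_lt.1 hcon)
    have hc : |c| ≤ 0 := (le_max_right |b| |c|).trans (not_lt.1 hcon)
    rw [abs_nonpos_iff] at hb hc
    subst hb hc
    have ha : a ≠ 0 := fun h => hne ⟨h, rfl, rfl⟩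
    have : (1 : ℝ) ≤ |(a : ℝ)| := by exact_mod_cast Int.one_le_abs ha
    simp at h1
    linarith
  have hbig : M ≤ max |b| |c| := hempty (a, b, c) hpos h1
  have h2' : |b - c| < M := by exact_mod_cast h2
  -- conclusion for a point with positive coordinates
  have fin : ∀ a b c : ℤ, 0 < b → 0 < c → |(a : ℝ) + b * α₁ + c * α₂| < ζ →
      (b : ℝ) + c < R + 1 → ∃ x : ℤ × ℤ, 0 < x.1 ∧ 0 < x.2 ∧
      ((max x.1 x.2 : ℤ) : ℝ) ≤ R ∧ nint (α₁ * x.1 + α₂ * x.2) < ζ := by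
    intro a b c hb hc hz hs
    refine ⟨(b, c), hb, hc, ?_, ?_⟩
    · have : max b c ≤ b + c - 1 := by omega
      have : ((max b c : ℤ) : ℝ) ≤ ((b + c - 1 : ℤ) : ℝ) := by exact_mod_cast this
      push_cast at this ⊢
      linarith
    · refine lt_of_le_of_lt (round_le _ (-a)) ?_
      exact lt_of_eq_of_lt (congrArg abs (by push_cast; ring)) hz
  have hsign : (0 < b ∧ 0 < c) ∨ (0 < -b ∧ 0 < -c) := by
    rw [abs_lt] at h2'
    rcases le_max_iff.1 hbig with h | h <;> rcases le_abs.1 h with h | h <;> omega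
  have h3' := abs_lt.1 h3
  rcases hsign with ⟨hb, hc⟩ | ⟨hb, hc⟩
  · exact fin a b c hb hc h1 h3'.2
  · refine fin (-a) (-b) (-c) hb hc ?_ ?_
    · rw [← abs_neg]; exact lt_of_eq_of_lt (congrArg abs (by push_cast; ring)) h1
    · push_cast; linarith [h3'.1]
end

section
/- Let 1, α₁, α₂ be linearly independent over ℤ and let m_{ν−1}, m_ν, m_{ν+1} be consecutive best approximations such that the determinant of the 3×3 matrix with rows m_{ν−1}, m_ν, m_{ν+1} is nonzero. Suppose ζ_ν ≤ (8·M_{ν−1}·M_{ν+1})^{−1} and ζ_{ν+1} ≤ (8·M_{ν−1}·M_ν)^{−1}. Then there exists an integer point (x₁⁰, x₂⁰) such that x₁⁰ > 0, x₂⁰ > 0, max{x₁⁰, x₂⁰} ≤ 20·M_{ν+1}, and ‖α₁x₁⁰ + α₂x₂⁰‖ < 40·M_{ν+1}·M_ν^{−1}·ζ_ν. -/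
theorem aux_core (B C p q r s : ℤ) (hB : 0 < B) (hBC : B ≤ C) (hp : 0 ≤ p) (hq : 0 ≤ q)
    (hr : 0 ≤ r) (hs : 0 ≤ s) (hpB : p ≤ B) (hqB : q ≤ B) (hrC : r ≤ C) (hsC : s ≤ C)
    (hm : p = B ∨ q = B) (hD : B * B < 4 * (q * r - p * s)) :
    ∃ X : ℤ, 0 ≤ X ∧ 0 < 5 * r - X * p ∧ 5 * r - X * p ≤ 5 * C ∧ 0 < X * q - 5 * s ∧
      X * q - 5 * s ≤ 5 * C ∧ X * B ≤ 6 * C := by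
  have hq0 : 0 < q := by
    rcases hq.lt_or_eq with h | h
    · exact h
    · subst h
      nlinarith [mul_nonneg hp hs, mul_pos hB hB]
  have e1 := Int.mul_ediv_add_emod (5 * s) q
  have e2 := Int.emod_nonneg (5 * s) hq0.ne'
  have e3 := Int.emod_lt_of_pos (5 * s) hq0
  have e4 : 0 ≤ 5 * s / q := Int.ediv_nonneg (by linarith) hq
  obtain ⟨X, hX⟩ : ∃ X, X = 5 * s / q + 1 := ⟨_, rfl⟩
  have hXq : X * q = 5 * s - (5 * s) % q + q := by rw [hX]; linarith
  have hX0 : 0 ≤ X := by linarith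
  have hXp : 0 ≤ X * p := mul_nonneg hX0 hp
  have hpq : p * q ≤ B * B := mul_le_mul hpB hqB hq hB.le
  have hpm : 0 ≤ p * ((5 * s) % q) := mul_nonneg hp e2
  have key : 0 < 5 * r - X * p := by
    have h1 : 0 < (5 * r - X * p) * q := by
      have : (5 * r - X * p) * q = 5 * (q * r) - p * (X * q) := by ring
      rw [this, hXq]
      nlinarith [mul_pos hB hB]
    exact pos_of_mul_pos_left h1 hq
  refine ⟨X, hX0, key, by linarith, by linarith, by linarith, ?_⟩
  rcases hm with h | h
  · rw [h] at key; linarith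
  · have h7 : X * q = X * B := by rw [h]
    linarith

theorem aux_sign (u v : ℤ) (h : u * v ≤ 0) :
    ∃ e : ℤ, (e = 1 ∨ e = -1) ∧ 0 ≤ e * u ∧ 0 ≤ -(e * v) := by
  rcases mul_nonpos_iff.1 h with h | h
  · exact ⟨1, Or.inl rfl, by linarith [h.1], by linarith [h.2]⟩
  · exact ⟨-1, Or.inr rfl, by linarith [h.1], by linarith [h.2]⟩

theorem aux_pos (u v : ℤ) (h : 0 < u * v) :
    ∃ e : ℤ, |e| = 1 ∧ 0 < e * u ∧ 0 < e * v := by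
  rcases mul_pos_iff.1 h with h | h
  · exact ⟨1, by simp, by linarith [h.1], by linarith [h.2]⟩
  · exact ⟨-1, by simp, by linarith [h.1], by linarith [h.2]⟩

theorem aux_planar (B C b1 b2 c1 c2 : ℤ) (hB : 0 < B) (hBC : B ≤ C) (hb : B = max |b1| |b2|)
    (hc : C = max |c1| |c2|) (hD : B * B < 4 * |b1 * c2 - b2 * c1|) :
    ∃ X Y : ℤ, 0 < X * b1 + Y * c1 ∧ 0 < X * b2 + Y * c2 ∧ X * b1 + Y * c1 ≤ 20 * C ∧
      X * b2 + Y * c2 ≤ 20 * C ∧ (|X| + |Y|) * B < 40 * C := by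
  have b1le : |b1| ≤ B := hb ▸ le_max_left _ _
  have b2le : |b2| ≤ B := hb ▸ le_max_right _ _
  have c1le : |c1| ≤ C := hc ▸ le_max_left _ _
  have c2le : |c2| ≤ C := hc ▸ le_max_right _ _
  have aux : ∀ e u : ℤ, |e| = 1 → e * u ≤ |u| := fun e u he => by
    have := le_abs_self (e * u)
    rwa [abs_mul, he, one_mul] at this
  rcases lt_or_ge 0 (b1 * b2) with hbb | hbb
  · obtain ⟨e, he, h1, h2⟩ := aux_pos _ _ hbb
    have := aux e b1 he
    have := aux e b2 he
    refine ⟨e, 0, by linarith, by linarith, by linarith, by linarith, ?_⟩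
    rw [he]; simp; linarith
  rcases lt_or_ge 0 (c1 * c2) with hcc | hcc
  · obtain ⟨e, he, h1, h2⟩ := aux_pos _ _ hcc
    have := aux e c1 he
    have := aux e c2 he
    refine ⟨0, e, by linarith, by linarith, by linarith, by linarith, ?_⟩
    rw [he]; simp; linarith
  obtain ⟨e, he, e1, e2⟩ := aux_sign _ _ hbb
  obtain ⟨d, hd, d1, d2⟩ := aux_sign _ _ hcc
  have he' : |e| = 1 := by rcases he with h | h <;> simp [h]
  have hd' : |d| = 1 := by rcases hd with h | h <;> simp [h]
  have p1 : |e * b1| = |b1| := by rw [abs_mul, he', one_mul]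
  have p2 : |e * b2| = |b2| := by rw [abs_mul, he', one_mul]
  have p3 : |d * c1| = |c1| := by rw [abs_mul, hd', one_mul]
  have p4 : |d * c2| = |c2| := by rw [abs_mul, hd', one_mul]
  rw [abs_of_nonneg e1] at p1
  rw [abs_of_nonpos (by linarith)] at p2
  rw [abs_of_nonneg d1] at p3
  rw [abs_of_nonpos (by linarith)] at p4
  have hm : |b1| = B ∨ |b2| = B := by
    rcases max_choice |b1| |b2| with h | h
    · left; rw [hb, h]
    · right; rw [hb, h]
  have hdet : |b1 * c2 - b2 * c1| = |(-(e * b2)) * (d * c1) - (e * b1) * (-(d * c2))| := by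
    have : (-(e * b2)) * (d * c1) - (e * b1) * (-(d * c2)) = e * (d * (b1 * c2 - b2 * c1)) := by
      ring
    rw [this, abs_mul, abs_mul, he', hd']; ring
  rw [hdet] at hD
  rcases le_or_gt 0 ((-(e * b2)) * (d * c1) - (e * b1) * (-(d * c2))) with hs | hs
  · rw [abs_of_nonneg hs] at hD
    obtain ⟨X, x0, x1, x2, x3, x4, x5⟩ := aux_core B C _ _ _ _ hB hBC e1 e2 d1 d2
      (by linarith) (by linarith) (by linarith) (by linarith) (by rw [p1, p2]; exact hm) hD
    refine ⟨-(X * e), 5 * d, by linarith, by linarith, by linarith, by linarith, ?_⟩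
    rw [abs_neg, abs_mul, abs_mul, he', hd', abs_of_nonneg x0, abs_of_nonneg (by norm_num : (0:ℤ) ≤ 5)]
    linarith
  · rw [abs_of_neg hs] at hD
    obtain ⟨X, x0, x1, x2, x3, x4, x5⟩ := aux_core B C _ _ _ _ hB hBC e2 e1 d2 d1
      (by linarith) (by linarith) (by linarith) (by linarith) (by rw [p1, p2]; exact hm.symm)
      (by linarith)
    refine ⟨X * e, -(5 * d), by linarith, by linarith, by linarith, by linarith, ?_⟩
    rw [abs_neg, abs_mul, abs_mul, he', hd', abs_of_nonneg x0, abs_of_nonneg (by norm_num : (0:ℤ) ≤ 5)]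
    linarith

theorem aux_gap (α₁ α₂ : ℝ) (a b : ℤ × ℤ × ℤ) (hab : ConsecutiveBest α₁ α₂ a b)
    (n : ℤ × ℤ × ℤ) (hn : 0 < hgt n) (hnb : hgt n < hgt b) :
    |zform α₁ α₂ a| ≤ |zform α₁ α₂ n| := by
  by_contra! hlt
  obtain ⟨ha, hb, hlt', hno⟩ := hab
  let f : ℤ × ℤ → ℤ × ℤ × ℤ := fun z => (-round (z.1 * α₁ + z.2 * α₂), z)
  have hf : ∀ k : ℤ × ℤ × ℤ, |zform α₁ α₂ (f k.2)| ≤ |zform α₁ α₂ k| := by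
    intro k
    have := round_le (k.2.1 * α₁ + k.2.2 * α₂) (-k.1)
    simp only [f, zform]
    push_cast at this ⊢
    have q1 : -(round ((k.2.1 : ℝ) * α₁ + k.2.2 * α₂) : ℝ) + k.2.1 * α₁ + k.2.2 * α₂ =
      k.2.1 * α₁ + k.2.2 * α₂ - round ((k.2.1 : ℝ) * α₁ + k.2.2 * α₂) := by ring
    have q2 : (k.1 : ℝ) + k.2.1 * α₁ + k.2.2 * α₂ = k.2.1 * α₁ + k.2.2 * α₂ - -(k.1 : ℝ) := by ring
    rw [q1, q2]
    exact this
  let H := hgt n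
  let S : Finset (ℤ × ℤ) := (Finset.Icc (-H) H ×ˢ Finset.Icc (-H) H).filter (fun z => 0 < hgt (f z))
  have hS : ∀ k : ℤ × ℤ × ℤ, 0 < hgt k → hgt k ≤ H → k.2 ∈ S := by
    intro k hk hkH
    have h1 : |k.2.1| ≤ H := le_trans (le_max_left _ _) hkH
    have h2 : |k.2.2| ≤ H := le_trans (le_max_right _ _) hkH
    rw [abs_le] at h1 h2
    simp only [S, Finset.mem_filter, Finset.mem_product, Finset.mem_Icc]
    exact ⟨⟨h1, h2⟩, hk⟩
  obtain ⟨z, hz, hmin⟩ := Finset.exists_min_image S (fun z => |zform α₁ α₂ (f z)|)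
    ⟨n.2, hS n hn le_rfl⟩
  have hz' := hz
  simp only [S, Finset.mem_filter, Finset.mem_product, Finset.mem_Icc] at hz'
  have hzH : hgt (f z) ≤ H := max_le (abs_le.2 hz'.1.1) (abs_le.2 hz'.1.2)
  have hle : ∀ k, 0 < hgt k → hgt k ≤ H → |zform α₁ α₂ (f z)| ≤ |zform α₁ α₂ k| :=
    fun k hk hkH => (hmin _ (hS k hk hkH)).trans (hf k)
  have hbest : IsBestApprox α₁ α₂ (f z) := ⟨hz'.2, fun k hk hkz => hle k hk (hkz.trans hzH)⟩
  have hzn := hle n hn le_rfl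
  rcases hno _ hbest with h | h
  · have := ha.2 _ hz'.2 h
    linarith
  · exact absurd (lt_of_le_of_lt (h.trans hzH) hnb) (lt_irrefl _)

theorem aux_dirichlet (α₁ α₂ : ℝ) (B : ℕ) (hB : 2 ≤ B) :
    ∃ n : ℤ × ℤ × ℤ, 0 < hgt n ∧ hgt n < B ∧ |zform α₁ α₂ n| * (B * B - 1) < 1 := by
  let N : ℕ := B * B - 1
  have hBB : 4 ≤ B * B := Nat.mul_le_mul hB hB
  have hN : (N : ℝ) = B * B - 1 := by
    have : N + 1 = B * B := Nat.sub_add_cancel (by linarith)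
    have : (N : ℝ) + 1 = B * B := by exact_mod_cast this
    linarith
  have hBR : (4 : ℝ) ≤ B * B := by exact_mod_cast hBB
  have hNpos : (0 : ℝ) < N := by linarith
  let T := Finset.range B ×ˢ Finset.range B
  let g : ℕ × ℕ → ℕ := fun z => ⌊Int.fract (z.1 * α₁ + z.2 * α₂) * N⌋₊
  have hmaps : ∀ z ∈ T, g z ∈ Finset.range N := by
    intro z _
    rw [Finset.mem_range]
    refine (Nat.floor_lt (mul_nonneg (Int.fract_nonneg _) hNpos.le)).2 ?_
    have := Int.fract_lt_one ((z.1 : ℝ) * α₁ + z.2 * α₂)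
    nlinarith
  obtain ⟨x, hx, y, hy, hxy, hg⟩ := Finset.exists_ne_map_eq_of_card_lt_of_maps_to
    (s := T) (t := Finset.range N) (f := g)
    (by simp only [T, Finset.card_product, Finset.card_range]; omega) hmaps
  simp only [T, Finset.mem_product, Finset.mem_range] at hx hy
  refine ⟨(-(⌊(x.1 : ℝ) * α₁ + x.2 * α₂⌋ - ⌊(y.1 : ℝ) * α₁ + y.2 * α₂⌋), (x.1 : ℤ) - y.1,
    (x.2 : ℤ) - y.2), ?_, ?_, ?_⟩
  · simp only [hgt, lt_max_iff, abs_pos]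
    by_contra! hcon
    apply hxy
    ext <;> omega
  · simp only [hgt, max_lt_iff, abs_lt]
    omega
  · rw [← hN]
    have k1 := Nat.floor_le (mul_nonneg (Int.fract_nonneg ((x.1 : ℝ) * α₁ + x.2 * α₂)) hNpos.le)
    have k2 := Nat.lt_floor_add_one (Int.fract ((x.1 : ℝ) * α₁ + x.2 * α₂) * N)
    have k3 := Nat.floor_le (mul_nonneg (Int.fract_nonneg ((y.1 : ℝ) * α₁ + y.2 * α₂)) hNpos.le)
    have k4 := Nat.lt_floor_add_one (Int.fract ((y.1 : ℝ) * α₁ + y.2 * α₂) * N)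
    have hg' : (⌊Int.fract ((x.1 : ℝ) * α₁ + x.2 * α₂) * N⌋₊ : ℝ) =
      (⌊Int.fract ((y.1 : ℝ) * α₁ + y.2 * α₂) * N⌋₊ : ℝ) := by exact_mod_cast hg
    rw [hg'] at k1 k2
    have : zform α₁ α₂ (-(⌊(x.1 : ℝ) * α₁ + x.2 * α₂⌋ - ⌊(y.1 : ℝ) * α₁ + y.2 * α₂⌋),
        (x.1 : ℤ) - y.1, (x.2 : ℤ) - y.2) =
        Int.fract ((x.1 : ℝ) * α₁ + x.2 * α₂) - Int.fract ((y.1 : ℝ) * α₁ + y.2 * α₂) := by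
      simp only [zform, Int.fract]; push_cast; ring
    rw [this, ← abs_of_pos hNpos, ← abs_mul, abs_lt]
    constructor <;> nlinarith

/-- Lemma 2: for consecutive best approximations a = m_{ν−1}, b = m_ν, c = m_{ν+1} with
nonzero determinant and ζ_ν ≤ (8M_{ν−1}M_{ν+1})⁻¹, ζ_{ν+1} ≤ (8M_{ν−1}M_ν)⁻¹, there is an
integer point with positive coordinates, max{x₁⁰,x₂⁰} ≤ 20M_{ν+1}, and
‖α₁x₁⁰+α₂x₂⁰‖ < 40·M_{ν+1}·M_ν⁻¹·ζ_ν. -/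
theorem lemma2 (α₁ α₂ : ℝ) (h : ZLinIndep α₁ α₂)
    (a b c : ℤ × ℤ × ℤ)
    (hab : ConsecutiveBest α₁ α₂ a b) (hbc : ConsecutiveBest α₁ α₂ b c)
    (hdet : Matrix.det !![a.1, a.2.1, a.2.2; b.1, b.2.1, b.2.2; c.1, c.2.1, c.2.2] ≠ 0)
    (h1 : |zform α₁ α₂ b| ≤ (8 * (hgt a : ℝ) * (hgt c : ℝ))⁻¹)
    (h2 : |zform α₁ α₂ c| ≤ (8 * (hgt a : ℝ) * (hgt b : ℝ))⁻¹) :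
    ∃ x : ℤ × ℤ, 0 < x.1 ∧ 0 < x.2 ∧
      ((max x.1 x.2 : ℤ) : ℝ) ≤ 20 * (hgt c : ℝ) ∧
      nint (α₁ * x.1 + α₂ * x.2) < 40 * (hgt c : ℝ) * (hgt b : ℝ)⁻¹ * |zform α₁ α₂ b| := by
  have hA0 : 0 < hgt a := hab.1.1
  have hAB : hgt a < hgt b := hab.2.2.1
  have hBC : hgt b < hgt c := hbc.2.2.1
  have hB0 : 0 < hgt b := hA0.trans hAB
  have hC0 : 0 < hgt c := hB0.trans hBC
  have hA0' : (1 : ℝ) ≤ hgt a := by exact_mod_cast hA0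
  have hB0' : (0 : ℝ) < hgt b := by exact_mod_cast hB0
  have hB2' : (2 : ℝ) ≤ hgt b := by exact_mod_cast (by linarith : 2 ≤ hgt b)
  have hC0' : (0 : ℝ) < hgt c := by exact_mod_cast hC0
  -- bound on zeta of a
  have hza : |zform α₁ α₂ a| * ((hgt b : ℝ) * hgt b - 1) < 1 := by
    obtain ⟨B, hB⟩ := Int.eq_ofNat_of_zero_le hB0.le
    obtain ⟨n, n1, n2, n3⟩ := aux_dirichlet α₁ α₂ B (by omega)
    have h3 := aux_gap α₁ α₂ a b hab n n1 (by rw [hB]; exact n2)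
    have hBr : (hgt b : ℝ) = B := by rw [hB]; simp
    rw [← hBr] at n3
    refine lt_of_le_of_lt (mul_le_mul_of_nonneg_right h3 ?_) n3
    nlinarith
  have b1 : |(b.2.1 : ℝ)| ≤ hgt b := by exact_mod_cast le_max_left |b.2.1| |b.2.2|
  have b2 : |(b.2.2 : ℝ)| ≤ hgt b := by exact_mod_cast le_max_right |b.2.1| |b.2.2|
  have a1 : |(a.2.1 : ℝ)| ≤ hgt a := by exact_mod_cast le_max_left |a.2.1| |a.2.2|
  have a2 : |(a.2.2 : ℝ)| ≤ hgt a := by exact_mod_cast le_max_right |a.2.1| |a.2.2|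
  have c1 : |(c.2.1 : ℝ)| ≤ hgt c := by exact_mod_cast le_max_left |c.2.1| |c.2.2|
  have c2 : |(c.2.2 : ℝ)| ≤ hgt c := by exact_mod_cast le_max_right |c.2.1| |c.2.2|
  have minor : ∀ u v w z U V : ℝ, |u| ≤ U → |v| ≤ U → |w| ≤ V → |z| ≤ V →
      |u * z - v * w| ≤ 2 * (U * V) := by
    intro u v w z U V hu hv hw hz
    have hU := (abs_nonneg u).trans hu
    calc |u * z - v * w| ≤ |u * z| + |v * w| := abs_sub _ _
      _ = |u| * |z| + |v| * |w| := by rw [abs_mul, abs_mul]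
      _ ≤ U * V + U * V := by gcongr
      _ = _ := by ring
  have m1 := minor _ _ _ _ _ _ a1 a2 c1 c2
  have m2 := minor _ _ _ _ _ _ a1 a2 b1 b2
  have hdet' : (1 : ℝ) ≤ |zform α₁ α₂ a * ((b.2.1 : ℝ) * c.2.2 - b.2.2 * c.2.1)
      - zform α₁ α₂ b * ((a.2.1 : ℝ) * c.2.2 - a.2.2 * c.2.1)
      + zform α₁ α₂ c * ((a.2.1 : ℝ) * b.2.2 - a.2.2 * b.2.1)| := by
    have h1 := Int.one_le_abs hdet
    have h2 : (1 : ℝ) ≤ |((Matrix.det !![a.1, a.2.1, a.2.2; b.1, b.2.1, b.2.2; c.1, c.2.1, c.2.2] : ℤ) : ℝ)| := by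
      exact_mod_cast h1
    refine h2.trans (le_of_eq ?_)
    congr 1
    rw [Matrix.det_fin_three]
    simp [zform]
    ring
  have t1 : |zform α₁ α₂ b * ((a.2.1 : ℝ) * c.2.2 - a.2.2 * c.2.1)| ≤ 1 / 4 := by
    rw [abs_mul]
    calc _ ≤ (8 * (hgt a : ℝ) * (hgt c : ℝ))⁻¹ * (2 * (hgt a * hgt c)) := by gcongr
      _ = 1 / 4 := by field_simp; norm_num
  have t2 : |zform α₁ α₂ c * ((a.2.1 : ℝ) * b.2.2 - a.2.2 * b.2.1)| ≤ 1 / 4 := by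
    rw [abs_mul]
    calc _ ≤ (8 * (hgt a : ℝ) * (hgt b : ℝ))⁻¹ * (2 * (hgt a * hgt b)) := by gcongr
      _ = 1 / 4 := by field_simp; norm_num
  have t3 : 1 / 2 ≤ |zform α₁ α₂ a| * |(b.2.1 : ℝ) * c.2.2 - b.2.2 * c.2.1| := by
    rw [← abs_mul]
    have q1 := abs_add_le (zform α₁ α₂ a * ((b.2.1 : ℝ) * c.2.2 - b.2.2 * c.2.1)
      - zform α₁ α₂ b * ((a.2.1 : ℝ) * c.2.2 - a.2.2 * c.2.1))
      (zform α₁ α₂ c * ((a.2.1 : ℝ) * b.2.2 - a.2.2 * b.2.1))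
    have q2 := abs_sub (zform α₁ α₂ a * ((b.2.1 : ℝ) * c.2.2 - b.2.2 * c.2.1))
      (zform α₁ α₂ b * ((a.2.1 : ℝ) * c.2.2 - a.2.2 * c.2.1))
    linarith
  have hD : (hgt b : ℝ) * hgt b < 4 * |(b.2.1 : ℝ) * c.2.2 - b.2.2 * c.2.1| := by
    generalize |(b.2.1 : ℝ) * c.2.2 - b.2.2 * c.2.1| = D at *
    generalize hZ : |zform α₁ α₂ a| = Z at *
    have hZ0 : 0 ≤ Z := hZ ▸ abs_nonneg _
    have hBB : (4 : ℝ) ≤ (hgt b : ℝ) * hgt b := by nlinarith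
    have hZ1 : 0 < Z := by
      rcases hZ0.lt_or_eq with h | h
      · exact h
      · rw [← h] at t3; norm_num at t3
    have s1 : Z * ((hgt b : ℝ) * hgt b - 1) < Z * (2 * D) := by linarith
    have s2 := lt_of_mul_lt_mul_left s1 hZ0
    linarith
  have hDz : hgt b * hgt b < 4 * |b.2.1 * c.2.2 - b.2.2 * c.2.1| := by exact_mod_cast hD
  obtain ⟨X, Y, x1, x2, x3, x4, x5⟩ := aux_planar (hgt b) (hgt c) _ _ _ _ hB0 hBC.le rfl rfl hDz
  refine ⟨(X * b.2.1 + Y * c.2.1, X * b.2.2 + Y * c.2.2), x1, x2, ?_, ?_⟩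
  · exact_mod_cast max_le x3 x4
  have hzc : |zform α₁ α₂ c| ≤ |zform α₁ α₂ b| := hbc.2.1.2 b hB0 hBC.le
  have hzb : 0 < |zform α₁ α₂ b| := by
    rw [abs_pos]
    intro h0
    obtain ⟨-, k1, k2⟩ := h b.1 b.2.1 b.2.2 h0
    simp [hgt, k1, k2] at hB0
  have r1 := round_le (α₁ * ((X * b.2.1 + Y * c.2.1 : ℤ) : ℝ) + α₂ * ((X * b.2.2 + Y * c.2.2 : ℤ) : ℝ))
    (-(X * b.1 + Y * c.1))
  have r2 : (α₁ * ((X * b.2.1 + Y * c.2.1 : ℤ) : ℝ) + α₂ * ((X * b.2.2 + Y * c.2.2 : ℤ) : ℝ))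
      - ((-(X * b.1 + Y * c.1) : ℤ) : ℝ) = X * zform α₁ α₂ b + Y * zform α₁ α₂ c := by
    simp only [zform]; push_cast; ring
  rw [r2] at r1
  have x5' : (|(X : ℝ)| + |(Y : ℝ)|) * hgt b < 40 * hgt c := by exact_mod_cast x5
  have x6 : |(X : ℝ)| + |(Y : ℝ)| < 40 * (hgt c : ℝ) * (hgt b : ℝ)⁻¹ := by
    rw [← div_eq_mul_inv, lt_div_iff₀ hB0']; exact x5'
  calc nint _ ≤ |X * zform α₁ α₂ b + Y * zform α₁ α₂ c| := r1
    _ ≤ |X * zform α₁ α₂ b| + |Y * zform α₁ α₂ c| := abs_add_le _ _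
    _ = |(X : ℝ)| * |zform α₁ α₂ b| + |(Y : ℝ)| * |zform α₁ α₂ c| := by rw [abs_mul, abs_mul]
    _ ≤ |(X : ℝ)| * |zform α₁ α₂ b| + |(Y : ℝ)| * |zform α₁ α₂ b| := by gcongr
    _ = (|(X : ℝ)| + |(Y : ℝ)|) * |zform α₁ α₂ b| := by ring
    _ < _ := mul_lt_mul_of_pos_right x6 hzb
end

section
/- Let 1, α₁, α₂ be linearly independent over ℤ, let m_{ν−1}, m_ν, m_{ν+1} be consecutive best approximations such that the determinant of the 3×3 matrix with rows m_{ν−1}, m_ν, m_{ν+1} is nonzero, put A_ν = M_ν^{1/τ}/120, and suppose ζ_ν < A_ν · M_{ν+1}^{−τ/(τ−1)} and ζ_{ν+1} ≤ (8·M_{ν−1}·M_ν)^{−1}. Then there exists an integer point (x₁⁰, x₂⁰) such that x₁⁰ > 0, x₂⁰ > 0, max{x₁⁰, x₂⁰} ≤ 20·M_{ν+1}, and ‖α₁x₁⁰ + α₂x₂⁰‖ < 24^τ·M_ν^{(1−τ)/τ}·(max{x₁⁰, x₂⁰})^{−τ}. -/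
lemma core0 (α₁ α₂ : ℝ) (b0 b1 b2 c0 c1 c2 Z : ℤ) (hb1 : 0 < b1) (hb2 : |b2| ≤ b1)
    (hZ : b1 < Z) (hc1 : |c1| ≤ Z) (hc2 : |c2| ≤ Z)
    (hz : |zform α₁ α₂ (c0, c1, c2)| ≤ |zform α₁ α₂ (b0, b1, b2)|)
    (hD : b1 ^ 2 < 2 * (b1 * c2 - b2 * c1)) :
    ∃ x0 x1 x2 : ℤ, 0 < x1 ∧ 0 < x2 ∧ x1 ≤ 4 * Z ∧ x2 ≤ 4 * Z ∧
      (b1 : ℝ) * |zform α₁ α₂ (x0, x1, x2)| ≤ 5 * Z * |zform α₁ α₂ (b0, b1, b2)| := by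
  rw [abs_le] at hb2 hc1 hc2
  have hbR : (0 : ℝ) < b1 := by exact_mod_cast hb1
  have hZR : (b1 : ℝ) < Z := by exact_mod_cast hZ
  by_cases hpos : 0 < b2
  · refine ⟨b0, b1, b2, hb1, hpos, by linarith, by linarith, ?_⟩
    apply mul_le_mul_of_nonneg_right _ (abs_nonneg _)
    linarith
  push Not at hpos
  set k : ℤ := (2 * c1 - 1) / b1 with hk
  have e1 := Int.emod_add_mul_ediv (2 * c1 - 1) b1
  have e2 := Int.emod_nonneg (2 * c1 - 1) hb1.ne'
  have e3 := Int.emod_lt_of_pos (2 * c1 - 1) hb1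
  rw [← hk] at e1
  have g1 : 0 < 2 * c1 - k * b1 := by linarith
  have g2 : 2 * c1 - k * b1 ≤ b1 := by linarith
  have key : b1 * (2 * c2 - k * b2) = 2 * (b1 * c2 - b2 * c1) + b2 * (2 * c1 - k * b1) := by ring
  refine ⟨2 * c0 - k * b0, 2 * c1 - k * b1, 2 * c2 - k * b2, g1, ?_, by linarith, ?_, ?_⟩
  · have : 0 < b1 * (2 * c2 - k * b2) := by rw [key]; nlinarith
    exact pos_of_mul_pos_right this hb1.le
  · have : b1 * (2 * c2 - k * b2) ≤ b1 * (4 * Z) := by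
      rw [key]
      have t1 : b1 * c2 ≤ b1 * Z := by nlinarith
      have t2 : -(b2 * c1) ≤ b1 * Z := by nlinarith
      have t3 : b2 * (2 * c1 - k * b1) ≤ 0 := by nlinarith
      linarith
    exact le_of_mul_le_mul_left this hb1
  · have hkb : |(k : ℝ)| * b1 ≤ 3 * Z := by
      have : |k| * b1 ≤ 3 * Z := by
        have ee : |k| * b1 = |k * b1| := by rw [abs_mul, abs_of_pos hb1]
        rw [ee, abs_le]
        constructor <;> linarith
      exact_mod_cast this
    have e : zform α₁ α₂ (2 * c0 - k * b0, 2 * c1 - k * b1, 2 * c2 - k * b2)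
        = 2 * zform α₁ α₂ (c0, c1, c2) - k * zform α₁ α₂ (b0, b1, b2) := by
      simp only [zform]; push_cast; ring
    rw [e]
    have t := abs_sub (2 * zform α₁ α₂ (c0, c1, c2)) (k * zform α₁ α₂ (b0, b1, b2))
    rw [abs_mul, abs_mul, abs_two] at t
    set u := |zform α₁ α₂ (c0, c1, c2)|
    set v := |zform α₁ α₂ (b0, b1, b2)|
    have hv : 0 ≤ v := abs_nonneg _
    have s1 := mul_le_mul_of_nonneg_left t hbR.le
    have s2 := mul_le_mul_of_nonneg_right hkb hv
    have s3 : (b1 : ℝ) * u ≤ Z * v := by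
      apply mul_le_mul hZR.le hz (abs_nonneg _); linarith
    nlinarith

lemma zneg (α₁ α₂ : ℝ) (a b c : ℤ) : |zform α₁ α₂ (-a, -b, -c)| = |zform α₁ α₂ (a, b, c)| := by
  rw [← abs_neg]; congr 1; simp only [zform]; push_cast; ring

lemma core1 (α₁ α₂ : ℝ) (b0 b1 b2 c0 c1 c2 Z : ℤ) (hb1 : 0 < |b1|) (hb2 : |b2| ≤ |b1|)
    (hZ : |b1| < Z) (hc1 : |c1| ≤ Z) (hc2 : |c2| ≤ Z)
    (hz : |zform α₁ α₂ (c0, c1, c2)| ≤ |zform α₁ α₂ (b0, b1, b2)|)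
    (hD : b1 ^ 2 < 2 * |b1 * c2 - b2 * c1|) :
    ∃ x0 x1 x2 : ℤ, 0 < x1 ∧ 0 < x2 ∧ x1 ≤ 4 * Z ∧ x2 ≤ 4 * Z ∧
      ((|b1| : ℤ) : ℝ) * |zform α₁ α₂ (x0, x1, x2)| ≤ 5 * Z * |zform α₁ α₂ (b0, b1, b2)| := by
  have main : ∀ b0 b1 b2 : ℤ, 0 < b1 → |b2| ≤ b1 → b1 < Z →
      |zform α₁ α₂ (c0, c1, c2)| ≤ |zform α₁ α₂ (b0, b1, b2)| →
      b1 ^ 2 < 2 * |b1 * c2 - b2 * c1| →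
      ∃ x0 x1 x2 : ℤ, 0 < x1 ∧ 0 < x2 ∧ x1 ≤ 4 * Z ∧ x2 ≤ 4 * Z ∧
      (b1 : ℝ) * |zform α₁ α₂ (x0, x1, x2)| ≤ 5 * Z * |zform α₁ α₂ (b0, b1, b2)| := by
    intro b0 b1 b2 p1 p2 p3 p4 p5
    rcases abs_cases (b1 * c2 - b2 * c1) with ⟨h, _⟩ | ⟨h, _⟩
    · exact core0 α₁ α₂ b0 b1 b2 c0 c1 c2 Z p1 p2 p3 hc1 hc2 p4 (by rw [h] at p5; exact p5)
    · exact core0 α₁ α₂ b0 b1 b2 (-c0) (-c1) (-c2) Z p1 p2 p3 (by rwa [abs_neg])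
        (by rwa [abs_neg]) (by rwa [zneg]) (by rw [h] at p5; linarith)
  rcases abs_cases b1 with ⟨h, _⟩ | ⟨h, _⟩
  · rw [h] at hb1 hb2 hZ ⊢
    exact main b0 b1 b2 hb1 hb2 hZ hz hD
  · rw [h] at hb1 hb2 hZ ⊢
    have := main (-b0) (-b1) (-b2) hb1 (by rwa [abs_neg]) hZ (by rwa [zneg]) (by
      rw [show -b1 * c2 - -b2 * c1 = -(b1 * c2 - b2 * c1) by ring, abs_neg]; linarith)
    rw [zneg] at this
    exact this

lemma zswap (α₁ α₂ : ℝ) (a b c : ℤ) : zform α₂ α₁ (a, c, b) = zform α₁ α₂ (a, b, c) := by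
  simp only [zform]; ring

lemma core2 (α₁ α₂ : ℝ) (b c : ℤ × ℤ × ℤ) (hb : 0 < hgt b) (hbc : hgt b < hgt c)
    (hz : |zform α₁ α₂ c| ≤ |zform α₁ α₂ b|)
    (hD : hgt b ^ 2 < 2 * |b.2.1 * c.2.2 - b.2.2 * c.2.1|) :
    ∃ x0 x1 x2 : ℤ, 0 < x1 ∧ 0 < x2 ∧ x1 ≤ 4 * hgt c ∧ x2 ≤ 4 * hgt c ∧
      (hgt b : ℝ) * |zform α₁ α₂ (x0, x1, x2)| ≤ 5 * hgt c * |zform α₁ α₂ b| := by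
  obtain ⟨b0, b1, b2⟩ := b
  obtain ⟨c0, c1, c2⟩ := c
  have hc1 : |c1| ≤ hgt (c0, c1, c2) := le_max_left _ _
  have hc2 : |c2| ≤ hgt (c0, c1, c2) := le_max_right _ _
  set Z := hgt (c0, c1, c2)
  rcases le_total |b2| |b1| with h | h
  · have e : hgt (b0, b1, b2) = |b1| := max_eq_left h
    rw [e] at hb hbc hD ⊢
    rw [sq_abs] at hD
    exact core1 α₁ α₂ b0 b1 b2 c0 c1 c2 Z hb h hbc hc1 hc2 hz hD
  · have e : hgt (b0, b1, b2) = |b2| := max_eq_right h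
    rw [e] at hb hbc hD ⊢
    rw [sq_abs] at hD
    obtain ⟨x0, x1, x2, q1, q2, q3, q4, q5⟩ := core1 α₂ α₁ b0 b2 b1 c0 c2 c1 Z hb h hbc hc2 hc1
      (by rw [zswap α₁ α₂, zswap α₁ α₂ b0]; exact hz) (by rw [abs_sub_comm]; exact hD)
    rw [zswap α₁ α₂ x0, zswap α₁ α₂ b0] at q5
    exact ⟨x0, x2, x1, q2, q1, q4, q3, q5⟩

lemma dirichlet (α₁ α₂ : ℝ) (Y : ℕ) (hY : 2 ≤ Y) :
    ∃ n : ℤ × ℤ × ℤ, 0 < hgt n ∧ hgt n < Y ∧ |zform α₁ α₂ n| * ((Y : ℝ) ^ 2 - 1) ≤ 1 := by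
  set N : ℕ := Y ^ 2 - 1 with hN
  have hN1 : N + 1 = Y ^ 2 := by have : 1 ≤ Y ^ 2 := Nat.one_le_pow _ _ (by omega)
                                 omega
  have hNR : (N : ℝ) = (Y : ℝ) ^ 2 - 1 := by
    have : ((N + 1 : ℕ) : ℝ) = ((Y ^ 2 : ℕ) : ℝ) := by rw [hN1]
    push_cast at this; linarith
  have hNpos : (0 : ℝ) < N := by
    rw [hNR]; have : (2 : ℝ) ≤ Y := by exact_mod_cast hY
    nlinarith
  let f : ℕ × ℕ → ℝ := fun p => Int.fract (p.1 * α₁ + p.2 * α₂)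
  have hcard : (Finset.range N).card < (Finset.range Y ×ˢ Finset.range Y).card := by
    simp only [Finset.card_product, Finset.card_range]; nlinarith
  obtain ⟨p, hp, q, hq, hpq, he⟩ := Finset.exists_ne_map_eq_of_card_lt_of_maps_to hcard
    (f := fun p => ⌊f p * N⌋₊) (by
      intro p _
      simp only [Finset.coe_range, Set.mem_Iio]
      rw [Nat.floor_lt (mul_nonneg (Int.fract_nonneg _) hNpos.le)]
      have := Int.fract_lt_one (p.1 * α₁ + p.2 * α₂)
      calc f p * N < 1 * N := mul_lt_mul_of_pos_right this hNpos
        _ = N := one_mul _)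
  simp only [Finset.mem_product, Finset.mem_range] at hp hq
  have hlt : |f p * N - f q * N| ≤ 1 := by
    have a1 := Nat.floor_le (mul_nonneg (Int.fract_nonneg (p.1 * α₁ + p.2 * α₂)) hNpos.le)
    have a2 := Nat.floor_le (mul_nonneg (Int.fract_nonneg (q.1 * α₁ + q.2 * α₂)) hNpos.le)
    have a3 := Nat.lt_floor_add_one (f p * N)
    have a4 := Nat.lt_floor_add_one (f q * N)
    have he' : (⌊f p * N⌋₊ : ℝ) = ⌊f q * N⌋₊ := by exact_mod_cast he
    simp only [f] at *
    rw [abs_le]; constructor <;> linarith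
  refine ⟨(⌊(q.1 * α₁ + q.2 * α₂ : ℝ)⌋ - ⌊(p.1 * α₁ + p.2 * α₂ : ℝ)⌋, (p.1 : ℤ) - q.1,
    (p.2 : ℤ) - q.2), ?_, ?_, ?_⟩
  · simp only [hgt, lt_max_iff, abs_pos]
    by_contra hcon
    push Not at hcon
    apply hpq
    ext <;> omega
  · simp only [hgt, max_lt_iff, abs_lt]
    omega
  · rw [← hNR]
    have : zform α₁ α₂ (⌊(q.1 * α₁ + q.2 * α₂ : ℝ)⌋ - ⌊(p.1 * α₁ + p.2 * α₂ : ℝ)⌋, (p.1 : ℤ) - q.1,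
      (p.2 : ℤ) - q.2) = f p - f q := by
      simp only [zform, f, Int.fract]; push_cast; ring
    rw [this]
    rw [← sub_mul, abs_mul, abs_of_pos hNpos] at hlt
    exact hlt

lemma below (α₁ α₂ : ℝ) (a b : ℤ × ℤ × ℤ) (hab : ConsecutiveBest α₁ α₂ a b)
    (n : ℤ × ℤ × ℤ) (hn : 0 < hgt n) (hn' : hgt n < hgt b) :
    |zform α₁ α₂ a| ≤ |zform α₁ α₂ n| := by
  obtain ⟨ha, hb, hlt, hno⟩ := hab
  let H := hgt b
  let S : Finset (ℤ × ℤ) := ((Finset.Icc (-H) H) ×ˢ (Finset.Icc (-H) H)).filter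
    (fun p => 0 < max |p.1| |p.2| ∧ max |p.1| |p.2| < H)
  have memS : ∀ p : ℤ × ℤ, 0 < max |p.1| |p.2| → max |p.1| |p.2| < H → p ∈ S := by
    intro p h1 h2
    simp only [S, Finset.mem_filter, Finset.mem_product, Finset.mem_Icc]
    refine ⟨?_, h1, h2⟩
    have := max_lt_iff.mp h2
    rw [abs_lt, abs_lt] at this
    omega
  let g : ℤ × ℤ → ℤ × ℤ × ℤ := fun p => (-round (p.1 * α₁ + p.2 * α₂ : ℝ), p.1, p.2)
  have hg : ∀ m : ℤ × ℤ × ℤ, |zform α₁ α₂ (g m.2)| ≤ |zform α₁ α₂ m| := by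
    intro m
    have := round_le (m.2.1 * α₁ + m.2.2 * α₂ : ℝ) (-m.1)
    simp only [zform, g]
    push_cast at this ⊢
    have e1 : ∀ r : ℝ, -r + m.2.1 * α₁ + m.2.2 * α₂ = m.2.1 * α₁ + m.2.2 * α₂ - r := by
      intro r; ring
    have e2 : (m.1 : ℝ) + m.2.1 * α₁ + m.2.2 * α₂ = m.2.1 * α₁ + m.2.2 * α₂ - -(m.1 : ℝ) := by ring
    rw [e1, e2]
    exact this
  obtain ⟨p, hp, hmin⟩ := S.exists_min_image (fun p => |zform α₁ α₂ (g p)|)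
    ⟨n.2, memS _ hn hn'⟩
  have hp' : 0 < hgt (g p) ∧ hgt (g p) < H := by
    simp only [S, Finset.mem_filter] at hp
    exact hp.2
  have hbest : IsBestApprox α₁ α₂ (g p) := by
    refine ⟨hp'.1, fun m h1 h2 => ?_⟩
    exact (hmin m.2 (memS _ h1 (lt_of_le_of_lt h2 hp'.2))).trans (hg m)
  rcases hno _ hbest with h | h
  · exact (ha.2 _ hp'.1 h).trans ((hmin n.2 (memS _ hn hn')).trans (hg n))
  · exact absurd hp'.2 (not_lt.mpr h)

lemma tau_sq : tau ^ 2 = tau + 1 := by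
  have := Real.sq_sqrt (show (0 : ℝ) ≤ 5 by norm_num)
  unfold tau; nlinarith

lemma tau_gt : 1 < tau := by
  have : (1 : ℝ) < Real.sqrt 5 := by
    rw [Real.lt_sqrt] <;> norm_num
  unfold tau; linarith

lemma ex1 : 1 / tau = tau - 1 := by
  have := tau_gt; have := tau_sq
  rw [div_eq_iff (by linarith)]; nlinarith

lemma ex2 : tau / (tau - 1) = tau + 1 := by
  have := tau_gt; have := tau_sq
  rw [div_eq_iff (by linarith)]; nlinarith

lemma ex3 : (1 - tau) / tau = tau - 2 := by
  have := tau_gt; have := tau_sq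
  rw [div_eq_iff (by linarith)]; nlinarith

theorem corollary3 (α₁ α₂ : ℝ) (h : ZLinIndep α₁ α₂)
    (a b c : ℤ × ℤ × ℤ)
    (hab : ConsecutiveBest α₁ α₂ a b) (hbc : ConsecutiveBest α₁ α₂ b c)
    (hdet : Matrix.det !![a.1, a.2.1, a.2.2; b.1, b.2.1, b.2.2; c.1, c.2.1, c.2.2] ≠ 0)
    (h1 : |zform α₁ α₂ b| <
      (hgt b : ℝ) ^ (1 / tau) / 120 * (hgt c : ℝ) ^ (-(tau / (tau - 1))))
    (h2 : |zform α₁ α₂ c| ≤ (8 * (hgt a : ℝ) * (hgt b : ℝ))⁻¹) :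
    ∃ x : ℤ × ℤ, 0 < x.1 ∧ 0 < x.2 ∧
      ((max x.1 x.2 : ℤ) : ℝ) ≤ 20 * (hgt c : ℝ) ∧
      nint (α₁ * x.1 + α₂ * x.2) <
        24 ^ tau * (hgt b : ℝ) ^ ((1 - tau) / tau) * ((max x.1 x.2 : ℤ) : ℝ) ^ (-tau) := by
  have hX : 0 < hgt a := hab.1.1
  have hXY : hgt a < hgt b := hab.2.2.1
  have hYZ : hgt b < hgt c := hbc.2.2.1
  have hX' : (0 : ℝ) < hgt a := by exact_mod_cast hX
  have hXY' : (hgt a : ℝ) < hgt b := by exact_mod_cast hXY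
  have hYZ' : (hgt b : ℝ) < hgt c := by exact_mod_cast hYZ
  have hY2 : (2 : ℝ) ≤ hgt b := by
    have : 2 ≤ hgt b := by omega
    exact_mod_cast this
  have hz : |zform α₁ α₂ c| ≤ |zform α₁ α₂ b| := hbc.2.1.2 b hab.2.1.1 hYZ.le
  have hτ := tau_gt
  rw [ex1, ex2] at h1
  rw [ex3]
  have hza : |zform α₁ α₂ a| * ((hgt b : ℝ) ^ 2 - 1) ≤ 1 := by
    obtain ⟨n, n1, n2, n3⟩ := dirichlet α₁ α₂ (hgt b).toNat (by omega)
    have e : (((hgt b).toNat : ℕ) : ℤ) = hgt b := Int.toNat_of_nonneg (by omega)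
    have e' : (((hgt b).toNat : ℕ) : ℝ) = hgt b := by exact_mod_cast congrArg (Int.cast (R := ℝ)) e
    rw [e] at n2
    rw [e'] at n3
    refine le_trans (mul_le_mul_of_nonneg_right (below α₁ α₂ a b hab n n1 n2) ?_) n3
    nlinarith
  have hzb : |zform α₁ α₂ b| * (hgt c : ℝ) ^ 2 ≤ 1 / 120 := by
    have hc0 : (0 : ℝ) < hgt c := by linarith
    have s : (hgt b : ℝ) ^ (tau - 1) ≤ (hgt c : ℝ) ^ (tau - 1) :=
      Real.rpow_le_rpow (by linarith) hYZ'.le (by linarith)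
    have p := Real.rpow_pos_of_pos hc0 (-(tau + 1))
    have e : (hgt c : ℝ) ^ (tau - 1) * (hgt c : ℝ) ^ (-(tau + 1)) * (hgt c : ℝ) ^ 2 = 1 := by
      rw [← Real.rpow_natCast, ← Real.rpow_add hc0, ← Real.rpow_add hc0]
      rw [show tau - 1 + -(tau + 1) + ((2 : ℕ) : ℝ) = 0 by push_cast; ring, Real.rpow_zero]
    calc |zform α₁ α₂ b| * (hgt c : ℝ) ^ 2
        ≤ ((hgt c : ℝ) ^ (tau - 1) / 120 * (hgt c : ℝ) ^ (-(tau + 1))) * (hgt c : ℝ) ^ 2 := by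
          apply mul_le_mul_of_nonneg_right _ (by positivity)
          refine h1.le.trans ?_
          apply mul_le_mul_of_nonneg_right _ p.le
          linarith
      _ = 1 / 120 := by linarith
  have hw : ∀ m n : ℤ × ℤ × ℤ, |((m.2.1 * n.2.2 - m.2.2 * n.2.1 : ℤ) : ℝ)| ≤ 2 * hgt m * hgt n := by
    intro m n
    have : |m.2.1 * n.2.2 - m.2.2 * n.2.1| ≤ 2 * hgt m * hgt n := by
      refine (abs_sub _ _).trans ?_
      rw [abs_mul, abs_mul]
      have i1 : |m.2.1| ≤ hgt m := le_max_left _ _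
      have i2 : |m.2.2| ≤ hgt m := le_max_right _ _
      have i3 : |n.2.1| ≤ hgt n := le_max_left _ _
      have i4 : |n.2.2| ≤ hgt n := le_max_right _ _
      have j1 := mul_le_mul i1 i4 (abs_nonneg _) ((abs_nonneg _).trans i1)
      have j2 := mul_le_mul i2 i3 (abs_nonneg _) ((abs_nonneg _).trans i1)
      linarith
    exact_mod_cast this
  have hD : hgt b ^ 2 < 2 * |b.2.1 * c.2.2 - b.2.2 * c.2.1| := by
    have d1 := Int.one_le_abs hdet
    have d2 : (1 : ℝ) ≤ |((Matrix.det !![a.1, a.2.1, a.2.2; b.1, b.2.1, b.2.2; c.1, c.2.1, c.2.2] : ℤ) : ℝ)| := by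
      exact_mod_cast d1
    have d3 : ((Matrix.det !![a.1, a.2.1, a.2.2; b.1, b.2.1, b.2.2; c.1, c.2.1, c.2.2] : ℤ) : ℝ)
        = zform α₁ α₂ a * ((b.2.1 * c.2.2 - b.2.2 * c.2.1 : ℤ) : ℝ)
          - zform α₁ α₂ b * ((a.2.1 * c.2.2 - a.2.2 * c.2.1 : ℤ) : ℝ)
          + zform α₁ α₂ c * ((a.2.1 * b.2.2 - a.2.2 * b.2.1 : ℤ) : ℝ) := by
      rw [Matrix.det_fin_three]
      simp only [zform]
      simp
      ring
    rw [d3] at d2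
    have d4 := d2.trans ((abs_add_le _ _).trans (add_le_add_left (abs_sub _ _) _))
    rw [abs_mul, abs_mul, abs_mul] at d4
    have w1 := mul_le_mul_of_nonneg_left (hw a c) (abs_nonneg (zform α₁ α₂ b))
    have w2 := mul_le_mul_of_nonneg_left (hw a b) (abs_nonneg (zform α₁ α₂ c))
    have w3 : |zform α₁ α₂ c| * (2 * hgt a * hgt b) ≤ 1 / 4 := by
      have hp : (0 : ℝ) < 8 * hgt a * hgt b := by
        have : (0 : ℝ) < hgt b := by linarith
        positivity
      have := mul_le_mul_of_nonneg_right h2 hp.le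
      rw [inv_mul_cancel₀ hp.ne'] at this
      linarith
    have w4 : |zform α₁ α₂ b| * (2 * hgt a * hgt c) ≤ 1 / 60 := by
      have : |zform α₁ α₂ b| * (hgt a * hgt c) ≤ |zform α₁ α₂ b| * (hgt c : ℝ) ^ 2 := by
        apply mul_le_mul_of_nonneg_left _ (abs_nonneg _)
        nlinarith
      linarith
    have w5 : 11 / 15 ≤ |zform α₁ α₂ a| * |((b.2.1 * c.2.2 - b.2.2 * c.2.1 : ℤ) : ℝ)| := by linarith
    have w6 : (hgt b : ℝ) ^ 2 < 2 * |((b.2.1 * c.2.2 - b.2.2 * c.2.1 : ℤ) : ℝ)| := by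
      set w := |((b.2.1 * c.2.2 - b.2.2 * c.2.1 : ℤ) : ℝ)|
      have hwp : 0 ≤ w := abs_nonneg _
      have t1 := mul_le_mul_of_nonneg_right hza hwp
      have t2 := mul_le_mul_of_nonneg_right w5 (show (0 : ℝ) ≤ (hgt b : ℝ) ^ 2 - 1 by nlinarith)
      nlinarith
    exact_mod_cast w6
  obtain ⟨x0, x1, x2, q1, q2, q3, q4, q5⟩ := core2 α₁ α₂ b c hab.2.1.1 hYZ hz hD
  have hmle : ((max x1 x2 : ℤ) : ℝ) ≤ 4 * hgt c := by
    have : max x1 x2 ≤ 4 * hgt c := max_le q3 q4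
    exact_mod_cast this
  have hmpos : (0 : ℝ) < ((max x1 x2 : ℤ) : ℝ) := by
    have : 0 < max x1 x2 := lt_max_of_lt_left q1
    exact_mod_cast this
  refine ⟨(x1, x2), q1, q2, by linarith, ?_⟩
  have hY0 : (0 : ℝ) < hgt b := by linarith
  have hZ0 : (0 : ℝ) < hgt c := by linarith
  have f1 : nint (α₁ * x1 + α₂ * x2) ≤ |zform α₁ α₂ (x0, x1, x2)| := by
    have := round_le (α₁ * x1 + α₂ * x2) (-x0)
    unfold nint
    refine this.trans (le_of_eq ?_)
    simp only [zform]
    push_cast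
    congr 1
    ring
  show nint (α₁ * x1 + α₂ * x2) < 24 ^ tau * (hgt b : ℝ) ^ (tau - 2) * ((max x1 x2 : ℤ) : ℝ) ^ (-tau)
  have f2 : (24 * (hgt c : ℝ)) ^ (-tau) ≤ ((max x1 x2 : ℤ) : ℝ) ^ (-tau) :=
    Real.rpow_le_rpow_of_nonpos hmpos (by linarith) (by linarith)
  have hP : (0 : ℝ) < (hgt b : ℝ) ^ (tau - 2) := Real.rpow_pos_of_pos hY0 _
  have hQ : (0 : ℝ) < (hgt c : ℝ) ^ (-tau) := Real.rpow_pos_of_pos hZ0 _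
  have h24 : (0 : ℝ) < 24 ^ tau := Real.rpow_pos_of_pos (by norm_num) _
  have f3 : (24 : ℝ) ^ tau * (24 * (hgt c : ℝ)) ^ (-tau) = (hgt c : ℝ) ^ (-tau) := by
    rw [Real.mul_rpow (by norm_num) hZ0.le, ← mul_assoc, ← Real.rpow_add (by norm_num),
      add_neg_cancel, Real.rpow_zero, one_mul]
  have f4 : (hgt b : ℝ) ^ (tau - 1) = hgt b * (hgt b : ℝ) ^ (tau - 2) := by
    rw [show tau - 1 = 1 + (tau - 2) by ring, Real.rpow_add hY0, Real.rpow_one]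
  have f5 : (hgt c : ℝ) * (hgt c : ℝ) ^ (-(tau + 1)) = (hgt c : ℝ) ^ (-tau) := by
    rw [show -tau = 1 + (-(tau + 1)) by ring, Real.rpow_add hZ0, Real.rpow_one]
  have f6 : |zform α₁ α₂ (x0, x1, x2)| < (hgt b : ℝ) ^ (tau - 2) * (hgt c : ℝ) ^ (-tau) := by
    refine lt_of_mul_lt_mul_left (a := (hgt b : ℝ)) ?_ hY0.le
    calc (hgt b : ℝ) * |zform α₁ α₂ (x0, x1, x2)| ≤ 5 * hgt c * |zform α₁ α₂ b| := q5
      _ < 5 * hgt c * ((hgt b : ℝ) ^ (tau - 1) / 120 * (hgt c : ℝ) ^ (-(tau + 1))) :=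
        mul_lt_mul_of_pos_left h1 (by linarith)
      _ = (hgt b * (hgt b : ℝ) ^ (tau - 2)) * (hgt c * (hgt c : ℝ) ^ (-(tau + 1))) / 24 := by
        rw [f4]; ring
      _ = (hgt b * ((hgt b : ℝ) ^ (tau - 2) * (hgt c : ℝ) ^ (-tau))) / 24 := by rw [f5]; ring
      _ ≤ hgt b * ((hgt b : ℝ) ^ (tau - 2) * (hgt c : ℝ) ^ (-tau)) := by
        have : 0 < hgt b * ((hgt b : ℝ) ^ (tau - 2) * (hgt c : ℝ) ^ (-tau)) := by positivity
        linarith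
  calc nint (α₁ * x1 + α₂ * x2) ≤ _ := f1
    _ < _ := f6
    _ = 24 ^ tau * (hgt b : ℝ) ^ (tau - 2) * (24 * (hgt c : ℝ)) ^ (-tau) := by rw [← f3]; ring
    _ ≤ _ := mul_le_mul_of_nonneg_left f2 (by positivity)
end
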